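/- Let n ≥ 4 be even, p a prime, and f_0 ∈ ℤ_p nonzero. The p-adic density, within the set F_{n,prim}(f_0,ℤ_p) of separable primitive binary forms of degree n over ℤ_p with leading coefficient f_0, of the subset of evenly ramified forms equals p^{-n/2} if v_p(f_0) = 0, and equals 1/(p^{n/2} + 1) if v_p(f_0) > 0. The p-adic density, within the set F_{n,max}(f_0,ℤ_p) of forms with R_F maximal, of the subset of evenly ramified forms equals p^{-n/2}·(1 + p^{-1})^{-1} if v_p(f_0) ∈ {0,1}, and equals 0 if v_p(f_0) > 1. -/

import Mathlib

open Polynomial Matrix MeasureTheory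
open scoped Classical
noncomputable section
namespace BHS



/-! ### Binary forms and the rings they cut out, over a general base -/

variable (R K : Type) [CommRing R] [Field K] [Algebra R K]

/-- The one-variable polynomial `F(x,1)` of the binary form of degree `n` with
coefficient vector `c` (so `F(x,z) = ∑ c i · x^(n-i) · z^i`), over `K`. -/
def binPoly (n : ℕ) (c : ℕ → R) : Polynomial K :=
  ∑ i ∈ Finset.range (n + 1), Polynomial.C (algebraMap R K (c i)) * Polynomial.X ^ (n - i)

/-- The étale algebra `K_F = K[x]/(F(x,1))`. -/
abbrev KF (n : ℕ) (c : ℕ → R) : Type := AdjoinRoot (binPoly R K n c)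

/-- θ, the image of x in K_F. -/
def θF (n : ℕ) (c : ℕ → R) : KF R K n c := AdjoinRoot.root _

/-- `ζ_i = ∑_{j<i} f_j θ^{i-j}`. -/
def ζF (n : ℕ) (c : ℕ → R) (i : ℕ) : KF R K n c :=
  ∑ j ∈ Finset.range i, algebraMap R (KF R K n c) (c j) * θF R K n c ^ (i - j)

/-- The ring `R_F`, as the free `R`-submodule of `K_F` with basis `1, ζ_1, …, ζ_{n-1}`
(a subring by Nakagawa's theorem). -/
def RFmod (n : ℕ) (c : ℕ → R) : Submodule R (KF R K n c) :=
  Submodule.span R ({1} ∪ {x | ∃ i, 1 ≤ i ∧ i ≤ n - 1 ∧ x = ζF R K n c i})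

/-- The fractional ideal `I_F^k`, as the free `R`-submodule of `K_F` with basis
`1, θ, …, θ^k, ζ_{k+1}, …, ζ_{n-1}`. -/
def IFmod (n : ℕ) (c : ℕ → R) (k : ℕ) : Submodule R (KF R K n c) :=
  Submodule.span R ({x | ∃ j ≤ k, x = θF R K n c ^ j} ∪
    {x | ∃ i, k + 1 ≤ i ∧ i ≤ n - 1 ∧ x = ζF R K n c i})

/-- `R_F` is the maximal order (the integral closure of `R`) in `K_F`. -/
def IsMaxOrder (n : ℕ) (c : ℕ → R) : Prop :=
  RFmod R K n c = Subalgebra.toSubmodule (integralClosure R (KF R K n c))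

/-- `M` is stable under multiplication by `R_F`, i.e. `M` is an `R_F`-submodule of `K_F`. -/
def IsStable (n : ℕ) (c : ℕ → R) (M : Submodule R (KF R K n c)) : Prop :=
  ∀ ρ ∈ RFmod R K n c, ∀ x ∈ M, ρ * x ∈ M

/-- `M` is an invertible fractional ideal of `R_F`. -/
def IsInvIdeal (n : ℕ) (c : ℕ → R) (M : Submodule R (KF R K n c)) : Prop :=
  IsStable R K n c M ∧
    ∃ N : Submodule R (KF R K n c), IsStable R K n c N ∧ M * N = RFmod R K n c

/-- The principal fractional ideal of `R_F` generated by `α`. -/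
def principal (n : ℕ) (c : ℕ → R) (α : KF R K n c) : Submodule R (KF R K n c) :=
  Submodule.span R {α} * RFmod R K n c

/-- `ρ` is a unit of the order `R_F`. -/
def IsUnitRF (n : ℕ) (c : ℕ → R) (ρ : KF R K n c) : Prop :=
  ρ ∈ RFmod R K n c ∧ ∃ σ ∈ RFmod R K n c, ρ * σ = 1

/-- `#R_F^×[2]`, the number of 2-torsion units of `R_F`. -/
def twoTorsUnitsCount (n : ℕ) (c : ℕ → R) : ℕ :=
  Nat.card {ρ : KF R K n c // ρ ∈ RFmod R K n c ∧ ρ ^ 2 = 1}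

/-- The number of 2-torsion elements of the ideal class group `Cl(R_F)`: the number of
invertible fractional ideals of `R_F` whose square is principal, counted modulo
principal fractional ideals. -/
def clTwoCount (n : ℕ) (c : ℕ → R) : ℕ :=
  Nat.card (Quot (fun (I J : {M : Submodule R (KF R K n c) //
      IsInvIdeal R K n c M ∧
        ∃ α : KF R K n c, IsUnit α ∧ M * M = principal R K n c α}) =>
    ∃ α : KF R K n c, IsUnit α ∧
      (I : Submodule R (KF R K n c)) =
        Submodule.span R {α} * (J : Submodule R (KF R K n c))))

/-- `α ∈ K_F` is totally positive: positive under every real embedding. -/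
def TotPos (n : ℕ) (c : ℕ → R) (α : KF R K n c) : Prop :=
  ∀ φ : KF R K n c →+* ℝ, 0 < φ α

/-- The number of 2-torsion elements of the narrow class group `Cl⁺(R_F)`. -/
def clTwoCountPlus (n : ℕ) (c : ℕ → R) : ℕ :=
  Nat.card (Quot (fun (I J : {M : Submodule R (KF R K n c) //
      IsInvIdeal R K n c M ∧
        ∃ α : KF R K n c, IsUnit α ∧ TotPos R K n c α ∧ M * M = principal R K n c α}) =>
    ∃ α : KF R K n c, IsUnit α ∧ TotPos R K n c α ∧
      (I : Submodule R (KF R K n c)) =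
        Submodule.span R {α} * (J : Submodule R (KF R K n c))))

/-- The order of the ideal class group of `R_F`. -/
def clCount (n : ℕ) (c : ℕ → R) : ℕ :=
  Nat.card (Quot (fun (I J : {M : Submodule R (KF R K n c) // IsInvIdeal R K n c M}) =>
    ∃ α : KF R K n c, IsUnit α ∧
      (I : Submodule R (KF R K n c)) =
        Submodule.span R {α} * (J : Submodule R (KF R K n c))))

/-- The order of the narrow class group of `R_F`. -/
def clCountPlus (n : ℕ) (c : ℕ → R) : ℕ :=
  Nat.card (Quot (fun (I J : {M : Submodule R (KF R K n c) // IsInvIdeal R K n c M}) =>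
    ∃ α : KF R K n c, IsUnit α ∧ TotPos R K n c α ∧
      (I : Submodule R (KF R K n c)) =
        Submodule.span R {α} * (J : Submodule R (KF R K n c))))




/-! ### p-adic machinery -/

variable (p : ℕ) [Fact p.Prime]

instance : MeasurableSpace ℤ_[p] := borel _
instance : BorelSpace ℤ_[p] := ⟨rfl⟩

/-- Haar probability measure on `ℤ_p^n`. -/
def haarP (n : ℕ) : Measure (Fin n → ℤ_[p]) :=
  Measure.addHaarMeasure ⟨⟨Set.univ, isCompact_univ⟩, by rw [interior_univ]; exact Set.univ_nonempty⟩

/-- The `p`-adic density of `A` within `B` (subsets of the coefficient space `ℤ_p^n`). -/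
def densIn (n : ℕ) (A B : Set (Fin n → ℤ_[p])) : ℝ :=
  (haarP p n A).toReal / (haarP p n B).toReal

/-- The coefficient vector of the degree-`n` binary form with leading coefficient `f0` and
remaining coefficients `v`. -/
def consF0 (n : ℕ) (f0 : ℤ_[p]) (v : Fin n → ℤ_[p]) : ℕ → ℤ_[p] :=
  fun j => if j = 0 then f0 else if h : j - 1 < n then v ⟨j - 1, h⟩ else 0

/-- The reduction of the binary form with coefficients `c` modulo `p`, as a polynomial in
two variables `x = X 0`, `z = X 1` over `F_p`. -/
def redForm (n : ℕ) (c : ℕ → ℤ_[p]) : MvPolynomial (Fin 2) (ZMod p) :=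
  ∑ i ∈ Finset.range (n + 1),
    MvPolynomial.C (PadicInt.toZMod (c i)) * MvPolynomial.X 0 ^ (n - i) * MvPolynomial.X 1 ^ i

/-- `F` is squareful over `ℤ_p`: `F ≡ κ·z^{e}·H² (mod p)` with `e > 0`, `κ ∈ F_p^×` and
`H` a monic binary form over `F_p` (hence not divisible by `z`). -/
def SquarefulP (n : ℕ) (c : ℕ → ℤ_[p]) : Prop :=
  ∃ (κ : (ZMod p)ˣ) (e d : ℕ) (H : MvPolynomial (Fin 2) (ZMod p)),
    0 < e ∧ H.IsHomogeneous d ∧ MvPolynomial.coeff (Finsupp.single 0 d) H = 1 ∧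
    redForm p n c = MvPolynomial.C (κ : ZMod p) * MvPolynomial.X 1 ^ e * H ^ 2

/-- `F` is evenly ramified over `ℤ_p`: `F ≡ κ·H² (mod p)` with `κ ∈ F_p^×`. -/
def EvenRamP (n : ℕ) (c : ℕ → ℤ_[p]) : Prop :=
  ∃ (κ : (ZMod p)ˣ) (H : MvPolynomial (Fin 2) (ZMod p)),
    redForm p n c = MvPolynomial.C (κ : ZMod p) * H ^ 2

/-- `F` is primitive over `ℤ_p`: its coefficients generate the unit ideal. -/
def PrimP (n : ℕ) (c : ℕ → ℤ_[p]) : Prop := ∃ i ≤ n, IsUnit (c i)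

/-- `F` is separable (of degree `n`) over `ℚ_p`. -/
def SepDegP (n : ℕ) (c : ℕ → ℤ_[p]) : Prop :=
  (binPoly ℤ_[p] ℚ_[p] n c).Separable ∧ (binPoly ℤ_[p] ℚ_[p] n c).natDegree = n

/-- The determinant of the Sylvester matrix of `F(x,1)` (of formal degree n) and
`F'(x,1)` (of formal degree n-1); it equals `±f_0` times the discriminant of the form. -/
def sylvDet (S : Type) [CommRing S] (n : ℕ) (c : ℕ → S) : S :=
  Matrix.det (Matrix.of (fun (i j : Fin (n + (n - 1))) =>
    if (i : ℕ) < n - 1 then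
      (if (i : ℕ) ≤ (j : ℕ) ∧ (j : ℕ) ≤ (i : ℕ) + n then c ((j : ℕ) - (i : ℕ)) else 0)
    else
      (if (i : ℕ) - (n - 1) ≤ (j : ℕ) ∧ (j : ℕ) ≤ ((i : ℕ) - (n - 1)) + (n - 1) then
        ((n - ((j : ℕ) - ((i : ℕ) - (n - 1))) : ℕ) : S) * c ((j : ℕ) - ((i : ℕ) - (n - 1)))
      else 0)))

/-- The discriminant of the form with coefficients `c` is not divisible by `p²`. -/
def DiscOK (n : ℕ) (c : ℕ → ℤ_[p]) : Prop :=
  ¬ ((p : ℤ_[p]) ^ 2 * c 0 ∣ sylvDet ℤ_[p] n c)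

/-- The reduction modulo `p` of the degree-`n` binary form with coefficients `c` is a
separable binary form over `F_p`. -/
def SepFormModP (n : ℕ) (c : ℕ → ℤ_[p]) : Prop :=
  (∑ i ∈ Finset.range (n + 1),
      Polynomial.C (PadicInt.toZMod (c i)) * (Polynomial.X : Polynomial (ZMod p)) ^ (n - i)).Separable ∧
  n - 1 ≤ (∑ i ∈ Finset.range (n + 1),
      Polynomial.C (PadicInt.toZMod (c i)) * (Polynomial.X : Polynomial (ZMod p)) ^ (n - i)).natDegree



/-- An element stabilising a finitely generated submodule containing a unit is integral. -/
lemma isIntegral_of_stable {R A : Type*} [CommRing R] [CommRing A] [Algebra R A]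
    (N : Submodule R A) (hfg : N.FG) (u : A) (hu : IsUnit u) (huN : u ∈ N) (x : A)
    (hx : ∀ n ∈ N, x * n ∈ N) : IsIntegral R x := by
  have : Module.Finite R N := by rwa [Module.Finite.iff_fg]
  let e : Module.End R N := (LinearMap.mulLeft R x).restrict hx
  have he : IsIntegral R e := Algebra.IsIntegral.isIntegral e
  obtain ⟨f, hf, h0⟩ := he
  refine ⟨f, hf, ?_⟩
  have h1 : ∀ (g : R[X]) (n : N), ((aeval e g n : N) : A) = aeval x g * n := by
    intro g n
    induction g using Polynomial.induction_on' with
    | add p q hp hq => simp [hp, hq, add_mul]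
    | monomial k a =>
      simp only [aeval_monomial, Module.End.mul_apply, Module.algebraMap_end_apply]
      rw [Submodule.coe_smul, mul_assoc, ← Algebra.smul_def]
      congr 1
      induction k with
      | zero => simp
      | succ k ih =>
        rw [pow_succ', Module.End.mul_apply, pow_succ', mul_assoc, ← ih]
        rfl
  have h2 := h1 f ⟨u, huN⟩
  have h3 : aeval e f = 0 := h0
  rw [h3] at h2
  simp at h2
  exact (hu.mul_left_eq_zero.mp h2.symm)

/-- An element integral over both `R[θ]` and `R[θ⁻¹]` is integral over `R`. -/
lemma isIntegral_of_both {R A : Type*} [CommRing R] [Nontrivial R] [CommRing A] [Algebra R A]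
    (t y x : A) (hty : t * y = 1)
    (h1 : (aeval t : R[X] →ₐ[R] A).toRingHom.IsIntegralElem x)
    (h2 : (aeval y : R[X] →ₐ[R] A).toRingHom.IsIntegralElem x) : IsIntegral R x := by
  obtain ⟨f, hf, hf0⟩ := h1
  obtain ⟨g, hg, hg0⟩ := h2
  -- relation in common shape
  have key : ∀ (s : A) (F : R[X][X]), F.Monic → eval₂ (aeval s : R[X] →ₐ[R] A).toRingHom x F = 0 →
      ∀ K, F.natDegree ≤ K → ∃ a : ℕ → R[X],
        x ^ K = ∑ i ∈ Finset.range K, aeval s (a i) * x ^ i := by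
    intro s F hF hF0 K hK
    have hm : (F * X ^ (K - F.natDegree)).Monic := hF.mul (monic_X_pow _)
    have hd : (F * X ^ (K - F.natDegree)).natDegree = K := by
      rw [hF.natDegree_mul (monic_X_pow _), natDegree_X_pow]; omega
    have h0 : eval₂ (aeval s : R[X] →ₐ[R] A).toRingHom x (F * X ^ (K - F.natDegree)) = 0 := by
      rw [eval₂_mul, hF0, zero_mul]
    refine ⟨fun i => - (F * X ^ (K - F.natDegree)).coeff i, ?_⟩
    rw [eval₂_eq_sum_range, hd, Finset.sum_range_succ] at h0
    have hc : (F * X ^ (K - F.natDegree)).coeff K = 1 := by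
      have := hm.coeff_natDegree; rwa [hd] at this
    rw [hc] at h0
    simp only [map_neg, neg_mul, Finset.sum_neg_distrib]
    rw [eq_neg_iff_add_eq_zero, add_comm]
    simpa using h0
  set K := f.natDegree + g.natDegree + 1 with hKdef
  obtain ⟨a, ha⟩ := key t f hf hf0 K (by omega)
  obtain ⟨b, hb⟩ := key y g hg hg0 K (by omega)
  set N := ∑ i ∈ Finset.range K, ((a i).natDegree + (b i).natDegree) with hN
  have hNa : ∀ i < K, (a i).natDegree ≤ N ∧ (b i).natDegree ≤ N := by
    intro i hi
    have := Finset.single_le_sum (f := fun i => ((a i).natDegree + (b i).natDegree))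
      (fun _ _ => Nat.zero_le _) (Finset.mem_range.mpr hi)
    omega
  let ge : ℕ × ℕ × ℕ → A := fun q => t ^ q.1 * y ^ q.2.1 * x ^ q.2.2
  let G : Finset (ℕ × ℕ × ℕ) := Finset.range (N+1) ×ˢ Finset.range (N+1) ×ˢ Finset.range K
  let W : Submodule R A := Submodule.span R (ge '' (G : Set (ℕ × ℕ × ℕ)))
  have hmem : ∀ r s i, r ≤ N → s ≤ N → i < K → t ^ r * y ^ s * x ^ i ∈ W := by
    intro r s i hr hs hi
    refine Submodule.subset_span ⟨(r, s, i), ?_, rfl⟩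
    simp only [G, Finset.coe_product, Set.mem_prod, Finset.mem_coe, Finset.mem_range]
    omega
  have hyt : y * t = 1 := by rw [mul_comm, hty]
  have hred1 : ∀ r s, s ≤ r → t ^ r * y ^ s = t ^ (r - s) := by
    intro r s h
    conv_lhs => rw [← Nat.sub_add_cancel h, pow_add, mul_assoc, ← mul_pow, hty, one_pow, mul_one]
  have hred2 : ∀ r s, r ≤ s → t ^ r * y ^ s = y ^ (s - r) := by
    intro r s h
    conv_lhs => rw [← Nat.sub_add_cancel h, pow_add, mul_comm, mul_assoc, ← mul_pow, hyt, one_pow, mul_one]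
  refine isIntegral_of_stable W (Submodule.fg_span (G.finite_toSet.image _)) 1 isUnit_one ?_ x ?_
  · have := hmem 0 0 0 (by omega) (by omega) (by omega)
    simpa using this
  · intro w hw
    induction hw using Submodule.span_induction with
    | zero => simp
    | add u v _ _ hu hv => rw [mul_add]; exact W.add_mem hu hv
    | smul c u _ hu => rw [mul_smul_comm]; exact W.smul_mem _ hu
    | mem w hw =>
      obtain ⟨⟨r, s, i⟩, hq, rfl⟩ := hw
      simp only [G, Finset.coe_product, Set.mem_prod, Finset.mem_coe, Finset.mem_range] at hq
      obtain ⟨hr, hs, hi⟩ := hq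
      have e1 : x * ge (r, s, i) = t ^ r * y ^ s * x ^ (i + 1) := by simp only [ge]; ring
      rw [e1]
      by_cases hik : i + 1 < K
      · exact hmem _ _ _ (by omega) (by omega) hik
      have hik' : i + 1 = K := by omega
      rw [hik']
      rcases le_total s r with h | h
      · rw [hred1 _ _ h, hb, Finset.mul_sum]
        refine W.sum_mem fun j hj => ?_
        have hjr := Finset.mem_range.mp hj
        rw [aeval_eq_sum_range, Finset.sum_mul, Finset.mul_sum]
        refine W.sum_mem fun l hl => ?_
        have hl' := Finset.mem_range.mp hl
        have := hNa j hjr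
        rw [smul_mul_assoc, mul_smul_comm, ← mul_assoc]
        exact W.smul_mem _ (hmem _ _ _ (by omega) (by omega) hjr)
      · rw [hred2 _ _ h, ha, Finset.mul_sum]
        refine W.sum_mem fun j hj => ?_
        have hjr := Finset.mem_range.mp hj
        rw [aeval_eq_sum_range, Finset.sum_mul, Finset.mul_sum]
        refine W.sum_mem fun l hl => ?_
        have hl' := Finset.mem_range.mp hl
        have := hNa j hjr
        rw [smul_mul_assoc, mul_smul_comm, ← mul_assoc, mul_comm (y ^ _)]
        exact W.smul_mem _ (hmem _ _ _ (by omega) (by omega) hjr)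

/-- The conductor argument: an integral element lies in the image of `R`, if every maximal ideal
which could contain the conductor is invertible. -/
lemma mem_range_of_local {R A : Type*} [CommRing R] [IsNoetherianRing R] [CommRing A]
    (ψ : R →+* A) (x : A) (hx : ψ.IsIntegralElem x) (u : R) (hu : IsUnit (ψ u))
    (k : ℕ) (hk : ∃ r, ψ (u ^ k) * x = ψ r)
    (H : ∀ m : Ideal R, m.IsMaximal → u ∈ m → (∀ r, ψ r = 0 → r ∈ m) →
      (∀ z : R, (∃ l r, ψ (z ^ l) * x = ψ r) → z ∈ m) →
      ∃ τ : A, (∀ r ∈ m, ∃ s, τ * ψ r = ψ s) ∧ ∃ r ∈ m, ∃ s ∉ m, τ * ψ r = ψ s) :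
    ∃ r, x = ψ r := by
  let _ := ψ.toAlgebra
  have hψ : ∀ r, ψ r = algebraMap R A r := fun _ => rfl
  have hxi : IsIntegral R x := hx
  let M : Subalgebra R A := Algebra.adjoin R {x}
  have hMfg : M.toSubmodule.FG := hxi.fg_adjoin_singleton
  -- conductor
  let c : Ideal R :=
    { carrier := {r | ∀ z ∈ M, ∃ s, ψ r * z = ψ s}
      add_mem' := by
        intro a b ha hb z hz
        obtain ⟨s, hs⟩ := ha z hz
        obtain ⟨s', hs'⟩ := hb z hz
        exact ⟨s + s', by rw [map_add, add_mul, hs, hs', map_add]⟩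
      zero_mem' := fun z _ => ⟨0, by simp⟩
      smul_mem' := by
        intro a b hb z hz
        obtain ⟨s, hs⟩ := hb z hz
        exact ⟨a * s, by rw [smul_eq_mul, map_mul, mul_assoc, hs, map_mul]⟩ }
  have hcM : ∀ r ∈ c, ∀ z ∈ M, ∃ s ∈ c, ψ r * z = ψ s := by
    intro r hr z hz
    obtain ⟨s, hs⟩ := hr z hz
    refine ⟨s, ?_, hs⟩
    intro w hw
    rw [← hs, mul_assoc]
    exact hr _ (M.mul_mem hz hw)
  -- if a power of z clears x then a power of z is in c
  have hpow : ∀ z : R, (∃ l r, ψ (z ^ l) * x = ψ r) → ∃ L, z ^ L ∈ c := by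
    rintro z ⟨l, r, hr⟩
    obtain ⟨f, hf, hf0⟩ := hxi
    refine ⟨l * f.natDegree, ?_⟩
    intro w hw
    have hw' : w ∈ (aeval x : R[X] →ₐ[R] A).range := by
      rwa [← Algebra.adjoin_singleton_eq_range_aeval]
    obtain ⟨g, rfl⟩ := hw'
    have hfx : aeval x f = 0 := hf0
    have hg : aeval x g = aeval x (g %ₘ f) := by
      conv_lhs => rw [← modByMonic_add_div g f]
      simp [hfx]
    change ∃ s, ψ _ * aeval x g = ψ s
    have hle : (g %ₘ f).natDegree ≤ f.natDegree := natDegree_modByMonic_le g hf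
    refine ⟨∑ i ∈ Finset.range ((g %ₘ f).natDegree + 1),
      (g %ₘ f).coeff i * (z ^ (l * (f.natDegree - i)) * r ^ i), ?_⟩
    rw [hg, aeval_eq_sum_range, Finset.mul_sum, map_sum]
    refine Finset.sum_congr rfl fun i hi => ?_
    have hi' : i ≤ f.natDegree := by have := Finset.mem_range.mp hi; omega
    have e1 : z ^ (l * f.natDegree) = z ^ (l * (f.natDegree - i)) * (z ^ l) ^ i := by
      rw [← pow_mul, ← pow_add, ← Nat.mul_add, Nat.sub_add_cancel hi']
    rw [Algebra.smul_def, e1, map_mul, map_mul, map_mul, map_pow ψ r, ← hr, map_pow ψ (z ^ l), ← hψ]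
    ring
  by_contra hcon
  have hc1 : c ≠ ⊤ := by
    intro h
    have : (1 : R) ∈ c := by rw [h]; trivial
    obtain ⟨s, hs⟩ := this x (Algebra.self_mem_adjoin_singleton R x)
    exact hcon ⟨s, by simpa using hs⟩
  obtain ⟨m, hm, hcm⟩ := c.exists_le_maximal hc1
  have hzm : ∀ z : R, (∃ l r, ψ (z ^ l) * x = ψ r) → z ∈ m := by
    intro z hz
    obtain ⟨L, hL⟩ := hpow z hz
    exact hm.isPrime.mem_of_pow_mem L (hcm hL)
  obtain ⟨L, hL⟩ := hpow u ⟨k, hk⟩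
  have hker : ∀ r, ψ r = 0 → r ∈ m := by
    intro r hr
    apply hcm
    intro z _
    exact ⟨0, by simp [hr]⟩
  obtain ⟨τ, hτ, r0, hr0, s0, hs0, hrs⟩ := H m hm (hzm u ⟨k, hk⟩) hker hzm
  have hτi : IsIntegral R τ := by
    refine isIntegral_of_stable (Submodule.map (Algebra.linearMap R A) c)
      (Submodule.FG.map _ (IsNoetherian.noetherian c)) (ψ (u ^ L)) (by rw [map_pow]; exact hu.pow L)
      ⟨u ^ L, hL, rfl⟩ τ ?_
    rintro _ ⟨r, hr, rfl⟩
    obtain ⟨s, hs⟩ := hτ r (hcm hr)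
    refine ⟨s, ?_, hs.symm⟩
    intro z hz
    obtain ⟨r', hr', h'⟩ := hcM r hr z hz
    rw [← hs, mul_assoc, h']
    exact hτ r' (hcm hr')
  obtain ⟨f, hf, hf0⟩ := hτi
  -- multiply by r0^N
  have h1 : ψ (∑ i ∈ Finset.range (f.natDegree + 1), f.coeff i * s0 ^ i * r0 ^ (f.natDegree - i)) = 0 := by
    have h2 : eval₂ (algebraMap R A) τ f * ψ r0 ^ f.natDegree = 0 := by rw [hf0, zero_mul]
    rw [eval₂_eq_sum_range, Finset.sum_mul] at h2
    rw [map_sum, ← h2]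
    refine Finset.sum_congr rfl fun i hi => ?_
    have hi' : i ≤ f.natDegree := by have := Finset.mem_range.mp hi; omega
    rw [map_mul, map_mul, map_pow, map_pow, ← hrs, ← hψ]
    have e1 : ψ r0 ^ f.natDegree = ψ r0 ^ (f.natDegree - i) * ψ r0 ^ i := by
      rw [← pow_add, Nat.sub_add_cancel hi']
    rw [e1]
    ring
  rw [Finset.sum_range_succ, Nat.sub_self, hf.coeff_natDegree, pow_zero, mul_one, one_mul] at h1
  have h3 : (∑ i ∈ Finset.range f.natDegree, f.coeff i * s0 ^ i * r0 ^ (f.natDegree - i)) +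
      s0 ^ f.natDegree ∈ m := hker _ h1
  have h4 : (∑ i ∈ Finset.range f.natDegree, f.coeff i * s0 ^ i * r0 ^ (f.natDegree - i)) ∈ m := by
    refine m.sum_mem fun i hi => ?_
    have hi' := Finset.mem_range.mp hi
    exact m.mul_mem_left _ (m.pow_mem_of_mem hr0 _ (by omega))
  exact hs0 (hm.isPrime.mem_of_pow_mem _ ((m.add_mem_iff_right h4).mp h3))

section basicpoly

/-- The polynomial `F(x,1)` over the base ring. -/
def polyZ {R : Type} [CommRing R] (n : ℕ) (c : ℕ → R) : R[X] :=
  ∑ i ∈ Finset.range (n + 1), C (c i) * X ^ (n - i)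

/-- The polynomial `F(1,y)` over the base ring. -/
def polyRev {R : Type} [CommRing R] (n : ℕ) (c : ℕ → R) : R[X] :=
  ∑ i ∈ Finset.range (n + 1), C (c i) * X ^ i

lemma polyZ_natDegree_le {R : Type} [CommRing R] (n : ℕ) (c : ℕ → R) :
    (polyZ n c).natDegree ≤ n := by
  refine natDegree_sum_le_of_forall_le _ _ fun i _ => ?_
  exact (natDegree_C_mul_X_pow_le _ _).trans (Nat.sub_le _ _)

lemma polyZ_coeff {R : Type} [CommRing R] (n : ℕ) (c : ℕ → R) (k : ℕ) :
    (polyZ n c).coeff k = if k ≤ n then c (n - k) else 0 := by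
  rw [polyZ, finsetSum_coeff]
  simp only [coeff_C_mul, coeff_X_pow]
  split_ifs with h
  · rw [Finset.sum_eq_single (n - k)]
    · rw [if_pos (by omega), mul_one]
    · intro b hb hbn
      have := Finset.mem_range.mp hb
      rw [if_neg (by omega), mul_zero]
    · intro h'
      exact absurd (Finset.mem_range.mpr (by omega)) h'
  · refine Finset.sum_eq_zero fun i hi => ?_
    rw [if_neg (by omega), mul_zero]

lemma polyZ_map {R S : Type} [CommRing R] [CommRing S] (f : R →+* S) (n : ℕ) (c : ℕ → R) :
    (polyZ n c).map f = polyZ n (fun i => f (c i)) := by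
  simp [polyZ, Polynomial.map_sum]

lemma binPoly_eq {R K : Type} [CommRing R] [Field K] [Algebra R K] (n : ℕ) (c : ℕ → R) :
    binPoly R K n c = (polyZ n c).map (algebraMap R K) := by
  simp [polyZ, binPoly, Polynomial.map_sum]

end basicpoly

section red
variable {p : ℕ} [Fact p.Prime]

/-- Reduction of polynomials modulo `p`. -/
def red (p : ℕ) [Fact p.Prime] : ℤ_[p][X] →+* (ZMod p)[X] := mapRingHom PadicInt.toZMod

lemma toZMod_eq_zero_iff (x : ℤ_[p]) : PadicInt.toZMod x = 0 ↔ (p : ℤ_[p]) ∣ x := by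
  rw [← RingHom.mem_ker, PadicInt.ker_toZMod, PadicInt.maximalIdeal_eq_span_p,
    Ideal.mem_span_singleton]

lemma toZMod_surj : Function.Surjective (PadicInt.toZMod (p := p)) := ZMod.ringHom_surjective _

lemma red_surj : Function.Surjective (red p) := Polynomial.map_surjective _ toZMod_surj

lemma red_coeff (f : ℤ_[p][X]) (k : ℕ) : (red p f).coeff k = PadicInt.toZMod (f.coeff k) := by
  simp [red]

lemma red_Cp : red p (C (p : ℤ_[p])) = 0 := by simp [red]

lemma red_eq_zero_iff (f : ℤ_[p][X]) : red p f = 0 ↔ ∃ g, f = C (p : ℤ_[p]) * g := by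
  rw [← dvd_def, C_dvd_iff_dvd_coeff, Polynomial.ext_iff]
  simp [red_coeff, toZMod_eq_zero_iff]

lemma p_ne_zero' : (p : ℤ_[p]) ≠ 0 := by
  exact_mod_cast (Fact.out : p.Prime).ne_zero

lemma Cp_ne_zero : (C (p : ℤ_[p]) : ℤ_[p][X]) ≠ 0 := by
  rw [Ne, C_eq_zero]; exact p_ne_zero'

lemma isUnit_iff_not_dvd (x : ℤ_[p]) : IsUnit x ↔ ¬ (p : ℤ_[p]) ∣ x := by
  rw [← toZMod_eq_zero_iff, ← RingHom.mem_ker, PadicInt.ker_toZMod, IsLocalRing.mem_maximalIdeal,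
    mem_nonunits_iff, not_not]

/-- dividing with respect to the reduction -/
lemma exists_lift_dvd (f g : ℤ_[p][X]) (h : red p f ∣ red p g) :
    ∃ e u, g = f * e + C (p : ℤ_[p]) * u := by
  obtain ⟨e, he⟩ := h
  obtain ⟨e, rfl⟩ := red_surj e
  have : red p (g - f * e) = 0 := by rw [map_sub, map_mul, he, sub_self]
  obtain ⟨u, hu⟩ := (red_eq_zero_iff _).mp this
  exact ⟨e, u, by rw [← hu]; ring⟩

end red

section KF
variable {p : ℕ} [Fact p.Prime] (n : ℕ) (c : ℕ → ℤ_[p])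

local notation "KK" => KF ℤ_[p] ℚ_[p] n c
local notation "tt" => θF ℤ_[p] ℚ_[p] n c

lemma aeval_theta (g : ℤ_[p][X]) :
    aeval tt g = AdjoinRoot.mk (binPoly ℤ_[p] ℚ_[p] n c) (g.map (algebraMap ℤ_[p] ℚ_[p])) := by
  have : aeval tt g = aeval tt (g.map (algebraMap ℤ_[p] ℚ_[p])) := by
    rw [aeval_map_algebraMap]
  rw [this, θF, AdjoinRoot.aeval_eq]

lemma clear_denominators (f : ℚ_[p][X]) :
    ∃ (k : ℕ) (g : ℤ_[p][X]), C ((p : ℚ_[p]) ^ k) * f = g.map (algebraMap ℤ_[p] ℚ_[p]) := by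
  induction f using Polynomial.induction_on' with
  | add f g hf hg =>
    obtain ⟨k, a, ha⟩ := hf
    obtain ⟨l, b, hb⟩ := hg
    refine ⟨k + l, C ((p : ℤ_[p]) ^ l) * a + C ((p : ℤ_[p]) ^ k) * b, ?_⟩
    rw [Polynomial.map_add, Polynomial.map_mul, Polynomial.map_mul, ← ha, ← hb]
    rw [map_C, map_C]
    simp only [map_pow, map_natCast]
    ring
  | monomial m a =>
    obtain ⟨⟨x, ⟨y, hy⟩⟩, hxy⟩ := IsLocalization.surj (nonZeroDivisors ℤ_[p]) a
    have hy0 : y ≠ 0 := nonZeroDivisors.ne_zero hy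
    simp only at hxy
    have hy1 := PadicInt.unitCoeff_spec hy0
    generalize PadicInt.unitCoeff hy0 = w at hy1
    refine ⟨y.valuation, C (x * ((w⁻¹ : ℤ_[p]ˣ) : ℤ_[p])) * X ^ m, ?_⟩
    have e : (p : ℚ_[p]) ^ y.valuation * a =
        algebraMap ℤ_[p] ℚ_[p] (x * ((w⁻¹ : ℤ_[p]ˣ) : ℤ_[p])) := by
      have hy2 := congrArg (algebraMap ℤ_[p] ℚ_[p]) hy1
      rw [map_mul, map_pow, map_natCast] at hy2
      rw [map_mul, ← hxy, hy2]
      have : algebraMap ℤ_[p] ℚ_[p] (w : ℤ_[p]) *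
        algebraMap ℤ_[p] ℚ_[p] ((w⁻¹ : ℤ_[p]ˣ) : ℤ_[p]) = 1 := by
        rw [← map_mul, Units.mul_inv, map_one]
      linear_combination (-(p : ℚ_[p]) ^ y.valuation * a) * this
    rw [Polynomial.map_mul, map_C, ← e, Polynomial.map_pow, map_X, C_mul, mul_assoc,
      C_mul_X_pow_eq_monomial]

lemma dvd_of_aeval_eq_zero (hP : red p (polyZ n c) ≠ 0) (g : ℤ_[p][X]) (hg : aeval tt g = 0) :
    polyZ n c ∣ g := by
  rw [aeval_theta, AdjoinRoot.mk_eq_zero, binPoly_eq] at hg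
  obtain ⟨q, hq⟩ := hg
  obtain ⟨k, w, hw⟩ := clear_denominators q
  have hinj : Function.Injective (Polynomial.map (algebraMap ℤ_[p] ℚ_[p])) :=
    map_injective _ (IsFractionRing.injective _ _)
  have h1 : C (p : ℤ_[p]) ^ k * g = polyZ n c * w := by
    apply hinj
    rw [Polynomial.map_mul, Polynomial.map_mul, ← hw, hq]
    simp
    ring
  clear hw hq
  induction k generalizing w with
  | zero => exact ⟨w, by simpa using h1⟩
  | succ k ih =>
    have h2 : red p (polyZ n c) * red p w = 0 := by
      rw [← map_mul, ← h1, pow_succ, map_mul, map_mul, red_Cp]; ring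
    have h3 : red p w = 0 := by
      rcases mul_eq_zero.mp h2 with h | h
      · exact absurd h hP
      · exact h
    obtain ⟨w', rfl⟩ := (red_eq_zero_iff _).mp h3
    refine ih w' ?_
    apply mul_left_cancel₀ (Cp_ne_zero (p := p))
    linear_combination h1

lemma aeval_polyZ : aeval tt (polyZ n c) = 0 := by
  rw [aeval_theta, AdjoinRoot.mk_eq_zero, binPoly_eq]

lemma isUnit_algebraMap_KF (x : ℤ_[p]) (hx : x ≠ 0) : IsUnit (algebraMap ℤ_[p] KK x) := by
  rw [IsScalarTower.algebraMap_apply ℤ_[p] ℚ_[p] KK]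
  apply IsUnit.map
  rw [isUnit_iff_ne_zero]
  exact (map_ne_zero_iff _ (IsFractionRing.injective ℤ_[p] ℚ_[p])).mpr hx

lemma clear_KF (x : KK) : ∃ (k : ℕ) (g : ℤ_[p][X]), aeval tt (C (p : ℤ_[p]) ^ k) * x = aeval tt g := by
  obtain ⟨f, rfl⟩ := AdjoinRoot.mk_surjective x
  obtain ⟨k, g, hg⟩ := clear_denominators f
  refine ⟨k, g, ?_⟩
  rw [aeval_theta, aeval_theta, ← hg, ← map_mul]
  simp

end KF

section KF
variable {p : ℕ} [Fact p.Prime] (n : ℕ) (c : ℕ → ℤ_[p])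

local notation "KK" => KF ℤ_[p] ℚ_[p] n c
local notation "tt" => θF ℤ_[p] ℚ_[p] n c

lemma exists_generator (m : Ideal ℤ_[p][X]) (hm : m.IsMaximal) (hp : C (p : ℤ_[p]) ∈ m)
    (P : ℤ_[p][X]) (hP : P ∈ m) (hP0 : red p P ≠ 0) :
    ∃ φ : ℤ_[p][X], Prime (red p φ) ∧ ∀ r, r ∈ m ↔ red p φ ∣ red p r := by
  have hker : RingHom.ker (red p) ≤ m := by
    intro x hx
    obtain ⟨g, rfl⟩ := (red_eq_zero_iff x).mp hx
    exact m.mul_mem_right _ hp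
  have hcm : (m.map (red p)).comap (red p) = m := by
    rw [Ideal.comap_map_of_surjective' _ red_surj, sup_eq_left]
    exact hker
  obtain ⟨g, hg⟩ := IsPrincipalIdealRing.principal (m.map (red p))
  obtain ⟨φ, rfl⟩ := red_surj g
  have hiff : ∀ r, r ∈ m ↔ red p φ ∣ red p r := by
    intro r
    rw [← Ideal.mem_span_singleton]
    conv_lhs => rw [← hcm, Ideal.mem_comap, hg]
  refine ⟨φ, ⟨?_, ?_, ?_⟩, hiff⟩
  · intro h0
    have := (hiff P).mp hP
    rw [h0, zero_dvd_iff] at this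
    exact hP0 this
  · intro hu
    apply hm.ne_top
    rw [Ideal.eq_top_iff_one, hiff, map_one]
    exact hu.dvd
  · intro a b hab
    obtain ⟨a, rfl⟩ := red_surj a
    obtain ⟨b, rfl⟩ := red_surj b
    rw [← map_mul, ← hiff] at hab
    rw [← hiff, ← hiff]
    exact hm.isPrime.mem_or_mem hab

lemma mem_S_of_integral (A D G : ℤ_[p][X]) (hPe : polyZ n c = A * D ^ 2 + C (p : ℤ_[p]) * G)
    (hP0 : red p (polyZ n c) ≠ 0) (hA : Squarefree (red p A)) (hco : IsCoprime (red p D) (red p G))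
    (x : KK) (hx : (aeval tt : ℤ_[p][X] →ₐ[ℤ_[p]] KK).toRingHom.IsIntegralElem x) :
    ∃ g : ℤ_[p][X], x = aeval tt g := by
  obtain ⟨k, g, hkg⟩ := clear_KF n c x
  have hunit : IsUnit (aeval tt (C (p : ℤ_[p])) : KK) := by
    rw [aeval_C]; exact isUnit_algebraMap_KF n c _ p_ne_zero'
  refine mem_range_of_local (aeval tt : ℤ_[p][X] →ₐ[ℤ_[p]] KK).toRingHom x hx (C (p : ℤ_[p]))
    hunit k ⟨g, hkg⟩ ?_
  intro m hm hpm hker _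
  have hPm : polyZ n c ∈ m := hker _ (aeval_polyZ n c)
  obtain ⟨φ, hφ, hiff⟩ := exists_generator m hm hpm _ hPm hP0
  -- decomposition
  have hdec : ∃ Y Z : ℤ_[p][X], polyZ n c = φ * Y + C (p : ℤ_[p]) * Z ∧ (Y ∉ m ∨ Z ∉ m) := by
    by_cases hD : red p φ ∣ red p D
    · obtain ⟨E, U, hEU⟩ := exists_lift_dvd φ D hD
      refine ⟨φ * A * E ^ 2, 2 * A * φ * E * U + C (p : ℤ_[p]) * A * U ^ 2 + G, ?_, Or.inr ?_⟩
      · rw [hPe, hEU]; ring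
      · rw [hiff]
        intro hd
        have hG : red p φ ∣ red p G := by
          have e : red p (2 * A * φ * E * U + C (p : ℤ_[p]) * A * U ^ 2 + G) =
            red p φ * (red p (2 * A * E * U)) + red p G := by
            simp only [map_add, map_mul, red_Cp]; ring
          rw [e] at hd
          exact (dvd_add_right (dvd_mul_right _ _)).mp hd
        exact hφ.not_isUnit (hco.isUnit_of_dvd' hD hG)
    · have hA' : red p φ ∣ red p A := by
        have h1 := (hiff _).mp hPm
        rw [hPe, map_add, map_mul, map_mul, red_Cp, zero_mul, add_zero, map_pow] at h1
        rcases hφ.dvd_or_dvd h1 with h | h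
        · exact h
        · exact absurd (hφ.dvd_of_dvd_pow h) hD
      obtain ⟨E, U, hEU⟩ := exists_lift_dvd φ A hA'
      refine ⟨E * D ^ 2, U * D ^ 2 + G, ?_, Or.inl ?_⟩
      · rw [hPe, hEU]; ring
      · rw [hiff, map_mul, map_pow]
        intro hd
        rcases hφ.dvd_or_dvd hd with h | h
        · have e : red p A = red p φ * red p E := by
            rw [hEU, map_add, map_mul, map_mul, red_Cp, zero_mul, add_zero]
          have : red p φ * red p φ ∣ red p A := by rw [e]; exact mul_dvd_mul_left _ h
          exact hφ.not_isUnit (hA _ this)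
        · exact hD (hφ.dvd_of_dvd_pow h)
  obtain ⟨Y, Z, hYZ, hor⟩ := hdec
  have hφm : φ ∈ m := (hiff φ).mpr dvd_rfl
  obtain ⟨w, hw⟩ := hunit
  have h0 : aeval tt φ * aeval tt Y + aeval tt (C (p : ℤ_[p])) * aeval tt Z = 0 := by
    rw [← map_mul, ← map_mul, ← map_add, ← hYZ, aeval_polyZ]
  rw [← hw] at h0
  have hτp : (aeval tt Y * (w⁻¹ : KKˣ)) * aeval tt (C (p : ℤ_[p])) = aeval tt Y := by
    rw [← hw, mul_assoc, Units.inv_mul, mul_one]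
  have hτφ : (aeval tt Y * (w⁻¹ : KKˣ)) * aeval tt φ = aeval tt (-Z) := by
    rw [map_neg]
    have : (w : KK) * (w⁻¹ : KKˣ) = 1 := Units.mul_inv _
    linear_combination (w⁻¹ : KKˣ) * h0 - aeval tt Z * this
  refine ⟨aeval tt Y * (w⁻¹ : KKˣ), ?_, ?_⟩
  · intro r hr
    obtain ⟨e, u, hr'⟩ := exists_lift_dvd φ r ((hiff r).mp hr)
    refine ⟨-Z * e + Y * u, ?_⟩
    change _ * aeval tt r = aeval tt _
    rw [hr', map_add, map_mul, map_mul, map_add, map_mul (aeval tt) (-Z), ← hτφ, map_mul (aeval tt) Y]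
    linear_combination (aeval tt u) * hτp
  · rcases hor with h | h
    · exact ⟨_, hpm, Y, h, hτp⟩
    · exact ⟨_, hφm, -Z, by rwa [neg_mem_iff], hτφ⟩

lemma exists_inv_theta (hcn : c n ≠ 0) : ∃ y : KK, tt * y = 1 := by
  have h := aeval_polyZ n c
  obtain ⟨w, hw⟩ := isUnit_algebraMap_KF n c (c n) hcn
  rw [polyZ, map_sum, Finset.sum_range_succ] at h
  simp only [Nat.sub_self, pow_zero, mul_one, map_mul, aeval_C, map_pow, aeval_X] at h
  refine ⟨-(∑ i ∈ Finset.range n, algebraMap ℤ_[p] KK (c i) * tt ^ (n - 1 - i)) * (w⁻¹ : KKˣ), ?_⟩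
  have e : ∑ i ∈ Finset.range n, algebraMap ℤ_[p] KK (c i) * tt ^ (n - i) =
      tt * ∑ i ∈ Finset.range n, algebraMap ℤ_[p] KK (c i) * tt ^ (n - 1 - i) := by
    rw [Finset.mul_sum]
    refine Finset.sum_congr rfl fun i hi => ?_
    have := Finset.mem_range.mp hi
    have : n - i = (n - 1 - i) + 1 := by omega
    rw [this, pow_succ]; ring
  rw [e, ← hw] at h
  have h1 : (w : KK) * (w⁻¹ : KKˣ) = 1 := Units.mul_inv _
  linear_combination (-(w⁻¹ : KKˣ) : KK) * h + h1

/-- multiplying a polynomial in `θ` by a power of `θ⁻¹`. -/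
lemma exists_rev (y : KK) (hy : tt * y = 1) (N : ℕ) (g : ℤ_[p][X]) (hg : g.natDegree ≤ N) :
    y ^ N * aeval tt g = aeval y (reflect N g) := by
  rw [aeval_eq_sum_range' (Nat.lt_succ_of_le hg), aeval_eq_sum_range' (n := N + 1), Finset.mul_sum,
    ← Finset.sum_range_reflect]
  · refine Finset.sum_congr rfl fun i hi => ?_
    have hi' : i ≤ N := by have := Finset.mem_range.mp hi; omega
    rw [coeff_reflect, revAt_le hi', mul_smul_comm]
    have e : N + 1 - 1 - i = N - i := by omega
    rw [e]
    congr 1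
    have e2 : y ^ N = y ^ i * y ^ (N - i) := by rw [← pow_add]; congr 1; omega
    rw [e2, mul_assoc, ← mul_pow, mul_comm y, hy, one_pow, mul_one]
  · exact Nat.lt_succ_of_le (by simpa using (natDegree_reflect_le (p := g) (N := N)).trans (by simp [hg]))

lemma aeval_polyRev (y : KK) (hy : tt * y = 1) : aeval y (polyRev n c) = 0 := by
  have h := aeval_polyZ n c
  have h2 : aeval y (polyRev n c) = y ^ n * aeval tt (polyZ n c) := by
    rw [polyRev, polyZ, map_sum, map_sum, Finset.mul_sum]
    refine Finset.sum_congr rfl fun i hi => ?_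
    have hi' : i ≤ n := by have := Finset.mem_range.mp hi; omega
    simp only [map_mul, aeval_C, map_pow, aeval_X]
    have e2 : y ^ n = y ^ i * y ^ (n - i) := by rw [← pow_add]; congr 1; omega
    have e3 : y ^ (n - i) * tt ^ (n - i) = 1 := by rw [← mul_pow, mul_comm, hy, one_pow]
    rw [e2]
    linear_combination (-(algebraMap ℤ_[p] KK (c i) * y ^ i)) * e3
  rw [h2, h, mul_zero]

lemma polyRev_dec : ∃ Q, polyRev n c = C (c 0) + X * Q := by
  refine ⟨∑ i ∈ Finset.range n, C (c (i + 1)) * X ^ i, ?_⟩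
  rw [polyRev, Finset.sum_range_succ', Finset.mul_sum, add_comm, pow_zero, mul_one]
  have : ∀ i ∈ Finset.range n, C (c (i + 1)) * (X : ℤ_[p][X]) ^ (i + 1) = X * (C (c (i + 1)) * X ^ i) := by
    intro i _
    rw [pow_succ]; ring
  rw [Finset.sum_congr rfl this]

lemma mem_S'_aux {A : Type*} [CommRing A] [Algebra ℤ_[p] A] (hup : IsUnit (algebraMap ℤ_[p] A p)) (t : A) (h2 : ¬ (p : ℤ_[p]) ^ 2 ∣ c 0) (y : A) (hy : t * y = 1) (hyP : aeval y (polyRev n c) = 0)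
    (hrev : ∀ (N : ℕ) (g : ℤ_[p][X]), g.natDegree ≤ N → y ^ N * aeval t g = aeval y (reflect N g))
    (x : A) (hx : (aeval y : ℤ_[p][X] →ₐ[ℤ_[p]] A).toRingHom.IsIntegralElem x)
    (g : ℤ_[p][X]) (hg : x = aeval t g) : ∃ h : ℤ_[p][X], x = aeval y h := by
  refine mem_range_of_local (aeval y : ℤ_[p][X] →ₐ[ℤ_[p]] A).toRingHom x hx X
    (by change IsUnit (aeval y X); rw [aeval_X]; exact IsUnit.of_mul_eq_one t (by rw [mul_comm, hy]))
    g.natDegree ⟨reflect g.natDegree g, ?_⟩ ?_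
  · change aeval y (X ^ g.natDegree) * x = _
    rw [map_pow, aeval_X, hg, hrev _ g le_rfl]
    rfl
  intro m hm hX hker _
  have hPm : polyRev n c ∈ m := hker _ hyP
  have hdec := polyRev_dec n c
  obtain ⟨Q, hQ⟩ := hdec
  have hc0 : C (c 0) ∈ m := by
    have : C (c 0) = polyRev n c - X * Q := by rw [hQ]; ring
    rw [this]
    exact m.sub_mem hPm (m.mul_mem_right _ hX)
  have hunit : ∀ z : ℤ_[p], C z ∈ m → (p : ℤ_[p]) ∣ z := by
    intro z hz
    by_contra hd
    exact hm.ne_top (m.eq_top_of_isUnit_mem hz (isUnit_C.mpr ((isUnit_iff_not_dvd z).mpr hd)))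
  obtain ⟨u, hu⟩ := hunit _ hc0
  have hu1 : ¬ (p : ℤ_[p]) ∣ u := by
    rintro ⟨v, rfl⟩
    exact h2 ⟨v, by rw [hu]; ring⟩
  have hpm : C (p : ℤ_[p]) ∈ m := by
    rw [hu, C_mul] at hc0
    rcases hm.isPrime.mem_or_mem hc0 with h | h
    · exact h
    · exact absurd (hunit _ h) hu1
  obtain ⟨w, hw⟩ := hup
  have hz : algebraMap ℤ_[p] A p * algebraMap ℤ_[p] A u + y * aeval y Q = 0 := by
    have := hyP
    rwa [hQ, map_add, map_mul, aeval_C, aeval_X, hu, map_mul] at this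
  rw [← hw] at hz
  have h1 : (w : A) * (w⁻¹ : Aˣ) = 1 := Units.mul_inv _
  have hτp : (aeval y Q * (w⁻¹ : Aˣ)) * aeval y (C (p : ℤ_[p])) = aeval y Q := by
    rw [aeval_C, ← hw, mul_assoc, Units.inv_mul, mul_one]
  have hτy : (aeval y Q * (w⁻¹ : Aˣ)) * aeval y (X : ℤ_[p][X]) = aeval y ((-C u : ℤ_[p][X])) := by
    rw [map_neg, aeval_C, aeval_X]
    linear_combination (w⁻¹ : Aˣ) * hz - algebraMap ℤ_[p] A u * h1
  refine ⟨aeval y Q * (w⁻¹ : Aˣ), ?_, X, hX, -C u, ?_, hτy⟩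
  · intro r hr
    have hr' : r = X * r.divX + C (r.coeff 0) := (X_mul_divX_add r).symm
    have hr0 : C (r.coeff 0) ∈ m := by
      have : C (r.coeff 0) = r - X * r.divX := by nth_rewrite 2 [hr']; ring
      rw [this]
      exact m.sub_mem hr (m.mul_mem_right _ hX)
    obtain ⟨v, hv⟩ := hunit _ hr0
    refine ⟨-C u * r.divX + Q * C v, ?_⟩
    change _ * aeval y r = aeval y _
    rw [hr', hv, map_add, map_mul, map_add, map_mul (aeval y) (-C u), ← hτy, map_mul (aeval y) Q,
      C_mul, map_mul (aeval y) (C (p : ℤ_[p]))]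
    have e : (X * r.divX + C (p : ℤ_[p]) * C v).divX = r.divX := by
      rw [← C_mul, ← hv, ← hr']
    rw [e]
    linear_combination (aeval y (C v)) * hτp
  · rw [neg_mem_iff]
    exact fun h => hu1 (hunit _ h)
lemma mem_S'_of_integral (h2 : ¬ (p : ℤ_[p]) ^ 2 ∣ c 0) (y : KK) (hy : tt * y = 1)
    (x : KK) (hx : (aeval y : ℤ_[p][X] →ₐ[ℤ_[p]] KK).toRingHom.IsIntegralElem x)
    (g : ℤ_[p][X]) (hg : x = aeval tt g) : ∃ h : ℤ_[p][X], x = aeval y h :=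
  mem_S'_aux n c (isUnit_algebraMap_KF n c _ p_ne_zero') tt h2 y hy (aeval_polyRev n c y hy)
    (exists_rev n c y hy) x hx g hg

end KF

section KF3
variable {p : ℕ} [Fact p.Prime] (n : ℕ) (c : ℕ → ℤ_[p])

local notation "KK" => KF ℤ_[p] ℚ_[p] n c
local notation "tt" => θF ℤ_[p] ℚ_[p] n c
local notation "RR" => RFmod ℤ_[p] ℚ_[p] n c

/-- The polynomial `∑_{i ≥ 1} coeff_{i+l}(P) X^i`. -/
def Zp (l : ℕ) : ℤ_[p][X] := ∑ i ∈ Finset.range n, C ((polyZ n c).coeff (i + 1 + l)) * X ^ (i + 1)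

lemma Zp_coeff_succ (l i : ℕ) : (Zp n c l).coeff (i + 1) = (polyZ n c).coeff (i + 1 + l) := by
  rw [Zp, finsetSum_coeff]
  simp only [coeff_C_mul, coeff_X_pow, Nat.add_right_cancel_iff, mul_ite, mul_one, mul_zero]
  rw [Finset.sum_ite_eq]
  split_ifs with h
  · rfl
  · rw [polyZ_coeff, if_neg]
    have := Finset.mem_range.not.mp h
    omega

lemma Zp_mem (l : ℕ) (hl : 1 ≤ l) : aeval tt (Zp n c l) ∈ RR := by
  by_cases hln : n ≤ l
  · have : Zp n c l = 0 := by
      rw [Zp]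
      refine Finset.sum_eq_zero fun i _ => ?_
      rw [polyZ_coeff, if_neg (by omega), C_0, zero_mul]
    rw [this, map_zero]
    exact Submodule.zero_mem _
  · have e : aeval tt (Zp n c l) = ζF ℤ_[p] ℚ_[p] n c (n - l) := by
      rw [ζF, Zp, map_sum]
      have hsub : Finset.range (n - l) ⊆ Finset.range n :=
        Finset.range_subset_range.mpr (Nat.sub_le _ _)
      rw [← Finset.sum_subset hsub, ← Finset.sum_range_reflect]
      · refine Finset.sum_congr rfl fun i hi => ?_
        have := Finset.mem_range.mp hi
        rw [polyZ_coeff, if_pos (by omega), map_mul, map_pow, aeval_X, aeval_C]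
        have e1 : n - (n - l - 1 - i + 1 + l) = i := by omega
        have e2 : n - l - 1 - i + 1 = n - l - i := by omega
        rw [e1, e2]
      · intro i hi hi2
        have := Finset.mem_range.mp hi
        have := Finset.mem_range.not.mp hi2
        rw [polyZ_coeff, if_neg (by omega), C_0, zero_mul, map_zero]
    rw [e]
    exact Submodule.subset_span (Or.inr ⟨n - l, by omega, by omega, rfl⟩)

lemma mem_RF_of_both (hP : red p (polyZ n c) ≠ 0) (y : KK) (hy : tt * y = 1) (x : KK)
    (g h : ℤ_[p][X]) (hg : x = aeval tt g) (hh : x = aeval y h) : x ∈ RR := by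
  set N := h.natDegree with hN
  have hrev : aeval tt (X ^ N * g - reflect N h) = 0 := by
    have h1 := exists_rev n c y hy N (reflect N h)
      ((natDegree_reflect_le (p := h) (N := N)).trans (by simp [hN]))
    rw [reflect_reflect, ← hh] at h1
    rw [map_sub, map_mul, map_pow, aeval_X, ← hg, ← h1, ← mul_assoc, ← mul_pow, hy, one_pow, one_mul]
    have h2 : aeval tt (reflect N h) = tt ^ N * (y ^ N * aeval tt (reflect N h)) := by
      rw [← mul_assoc, ← mul_pow, hy, one_pow, one_mul]
    rw [sub_self]
  obtain ⟨w, hw⟩ := dvd_of_aeval_eq_zero n c hP _ hrev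
  have hmon : (X ^ N : ℤ_[p][X]).Monic := monic_X_pow N
  set w0 := w %ₘ X ^ N with hw0
  set w1 := w /ₘ X ^ N with hw1
  have hww : w = w0 + X ^ N * w1 := (modByMonic_add_div w (X ^ N)).symm
  have hdeg : w0.degree < N := by
    have := degree_modByMonic_lt w hmon
    rwa [degree_X_pow] at this
  set g' := g - polyZ n c * w1 with hg'
  have hx' : x = aeval tt g' := by
    rw [hg', map_sub, map_mul, aeval_polyZ, zero_mul, sub_zero, hg]
  have hkey : X ^ N * g' = reflect N h + polyZ n c * w0 := by
    rw [hg']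
    have : X ^ N * g = reflect N h + polyZ n c * w := by rw [← hw]; ring
    rw [mul_sub, this, hww]; ring
  have hw0s : w0 = ∑ k ∈ Finset.range N, C (w0.coeff k) * X ^ k := by
    ext i
    simp only [finsetSum_coeff, coeff_C_mul, coeff_X_pow, mul_ite, mul_one, mul_zero,
      Finset.sum_ite_eq]
    split_ifs with hi
    · rfl
    · have := Finset.mem_range.not.mp hi
      exact coeff_eq_zero_of_degree_lt (hdeg.trans_le (by exact_mod_cast not_lt.mp this))
  have hform : g' = C (g'.coeff 0) + ∑ k ∈ Finset.range N, C (w0.coeff k) * Zp n c (N - k) := by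
    ext i
    rcases i with _ | i
    · have : ∀ l, (Zp n c l).coeff 0 = 0 := by
        intro l
        rw [Zp, finsetSum_coeff]
        refine Finset.sum_eq_zero fun i _ => ?_
        rw [coeff_C_mul, coeff_X_pow, if_neg (by omega), mul_zero]
      simp [finsetSum_coeff, this]
    · have h1 := congrArg (fun q => coeff q (i + 1 + N)) hkey
      simp only [coeff_X_pow_mul, coeff_add] at h1
      rw [h1, coeff_reflect, revAt_eq_self_of_lt (by omega), coeff_eq_zero_of_natDegree_lt (by omega),
        zero_add, coeff_add, coeff_C_succ, zero_add, finsetSum_coeff]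
      conv_lhs => rw [hw0s, Finset.mul_sum, finsetSum_coeff]
      refine Finset.sum_congr rfl fun k hk => ?_
      have hk := Finset.mem_range.mp hk
      rw [coeff_C_mul, Zp_coeff_succ, mul_left_comm, coeff_C_mul]
      have e : i + 1 + N = (i + 1 + (N - k)) + k := by omega
      rw [e, coeff_mul_X_pow]
  rw [hx', hform, map_add, map_sum, aeval_C]
  refine Submodule.add_mem _ ?_ (Submodule.sum_mem _ fun k hk => ?_)
  · rw [Algebra.algebraMap_eq_smul_one]
    exact Submodule.smul_mem _ _ (Submodule.subset_span (Or.inl rfl))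
  · have hk := Finset.mem_range.mp hk
    rw [map_mul, aeval_C, ← Algebra.smul_def]
    exact Submodule.smul_mem _ _ (Zp_mem n c _ (by omega))

lemma aeval_integralElem {A : Type*} [CommRing A] [Algebra ℤ_[p] A] (y : A) (g : ℤ_[p][X]) :
    (aeval y : ℤ_[p][X] →ₐ[ℤ_[p]] A).toRingHom.IsIntegralElem (aeval y g) :=
  (aeval y : ℤ_[p][X] →ₐ[ℤ_[p]] A).toRingHom.isIntegralElem_map

/-- elements of `R_F` are polynomials in `θ`. -/
lemma mem_S_of_RF (x : KK) (hx : x ∈ RR) : ∃ g : ℤ_[p][X], x = aeval tt g := by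
  induction hx using Submodule.span_induction with
  | mem x hx =>
    rcases hx with hx | ⟨i, h1, h2, hx⟩
    · exact ⟨1, by rw [map_one]; exact hx⟩
    · refine ⟨∑ j ∈ Finset.range i, C (c j) * X ^ (i - j), ?_⟩
      rw [hx, ζF, map_sum]
      exact Finset.sum_congr rfl fun j _ => by rw [map_mul, map_pow, aeval_X, aeval_C]
  | zero => exact ⟨0, by rw [map_zero]⟩
  | add x y _ _ hx hy =>
    obtain ⟨a, rfl⟩ := hx
    obtain ⟨b, rfl⟩ := hy
    exact ⟨a + b, by rw [map_add]⟩
  | smul a x _ hx =>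
    obtain ⟨g, rfl⟩ := hx
    exact ⟨C a * g, by rw [map_mul, aeval_C, Algebra.smul_def]⟩

lemma mem_S'_of_RF (y : KK) (hy : tt * y = 1) (x : KK) (hx : x ∈ RR) :
    ∃ g : ℤ_[p][X], x = aeval y g := by
  induction hx using Submodule.span_induction with
  | mem x hx =>
    rcases hx with hx | ⟨i, h1, h2, hx⟩
    · exact ⟨1, by rw [map_one]; exact hx⟩
    · refine ⟨-∑ j ∈ Finset.range (n + 1 - i), C (c (i + j)) * X ^ j, ?_⟩
      have h0 := aeval_polyZ n c
      rw [polyZ, map_sum] at h0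
      have hsplit : n + 1 = i + (n + 1 - i) := by omega
      rw [hsplit, Finset.sum_range_add] at h0
      have e1 : ζF ℤ_[p] ℚ_[p] n c i = y ^ (n - i) * 
          ∑ x ∈ Finset.range i, aeval tt (C (c x) * X ^ (n - x)) := by
        rw [ζF, Finset.mul_sum]
        refine Finset.sum_congr rfl fun j hj => ?_
        have hj := Finset.mem_range.mp hj
        rw [map_mul, map_pow, aeval_X, aeval_C]
        have : n - j = (n - i) + (i - j) := by omega
        rw [this, pow_add]
        have e3 : y ^ (n - i) * tt ^ (n - i) = 1 := by rw [← mul_pow, mul_comm, hy, one_pow]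
        linear_combination (-(algebraMap ℤ_[p] KK (c j) * tt ^ (i - j))) * e3
      have e2 : aeval y (∑ j ∈ Finset.range (n + 1 - i), C (c (i + j)) * X ^ j) = y ^ (n - i) *
          ∑ x ∈ Finset.range (n + 1 - i), aeval tt (C (c (i + x)) * X ^ (n - (i + x))) := by
        rw [map_sum, Finset.mul_sum]
        refine Finset.sum_congr rfl fun j hj => ?_
        have hj := Finset.mem_range.mp hj
        rw [map_mul, map_pow, aeval_X, aeval_C, map_mul, map_pow, aeval_X, aeval_C]
        have : n - i = (n - (i + j)) + j := by omega
        rw [this, pow_add]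
        have e3 : y ^ (n - (i + j)) * tt ^ (n - (i + j)) = 1 := by
          rw [← mul_pow, mul_comm, hy, one_pow]
        linear_combination (-(algebraMap ℤ_[p] KK (c (i + j)) * y ^ j)) * e3
      rw [map_neg, e2, hx, e1]
      linear_combination y ^ (n - i) * h0
  | zero => exact ⟨0, by rw [map_zero]⟩
  | add x y _ _ hx hy =>
    obtain ⟨a, rfl⟩ := hx
    obtain ⟨b, rfl⟩ := hy
    exact ⟨a + b, by rw [map_add]⟩
  | smul a x _ hx =>
    obtain ⟨g, rfl⟩ := hx
    exact ⟨C a * g, by rw [map_mul, aeval_C, Algebra.smul_def]⟩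

lemma isIntegral_both_iff (y : KK) (hy : tt * y = 1) (x : KK) :
    IsIntegral ℤ_[p] x ↔ (aeval tt : ℤ_[p][X] →ₐ[ℤ_[p]] KK).toRingHom.IsIntegralElem x ∧
      (aeval y : ℤ_[p][X] →ₐ[ℤ_[p]] KK).toRingHom.IsIntegralElem x := by
  refine ⟨fun h => ?_, fun h => isIntegral_of_both tt y x hy h.1 h.2⟩
  have key : ∀ z : KK, (aeval z : ℤ_[p][X] →ₐ[ℤ_[p]] KK).toRingHom.IsIntegralElem x := by
    intro z
    obtain ⟨f, hf, h0⟩ := h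
    refine ⟨f.map C, hf.map _, ?_⟩
    rw [eval₂_map, ← h0]
    congr 1
    ext a
    simp
  exact ⟨key _, key _⟩

theorem isMax_of_coprime (hcn : c n ≠ 0) (h2 : ¬ (p : ℤ_[p]) ^ 2 ∣ c 0)
    (A D G : ℤ_[p][X]) (hPe : polyZ n c = A * D ^ 2 + C (p : ℤ_[p]) * G)
    (hP0 : red p (polyZ n c) ≠ 0) (hA : Squarefree (red p A)) (hco : IsCoprime (red p D) (red p G)) :
    IsMaxOrder ℤ_[p] ℚ_[p] n c := by
  obtain ⟨y, hy⟩ := exists_inv_theta n c hcn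
  rw [IsMaxOrder]
  ext x
  rw [Subalgebra.mem_toSubmodule, mem_integralClosure_iff, isIntegral_both_iff n c y hy]
  constructor
  · intro hx
    obtain ⟨g, hg⟩ := mem_S_of_RF n c x hx
    obtain ⟨h, hh⟩ := mem_S'_of_RF n c y hy x hx
    constructor
    · rw [hg]; exact aeval_integralElem _ _
    · rw [hh]; exact aeval_integralElem _ _
  · rintro ⟨hx1, hx2⟩
    obtain ⟨g, hg⟩ := mem_S_of_integral n c A D G hPe hP0 hA hco x hx1
    obtain ⟨h, hh⟩ := mem_S'_of_integral n c h2 y hy x hx2 g hg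
    exact mem_RF_of_both n c hP0 y hy x g h hg hh
end KF3

section KF4
variable {p : ℕ} [Fact p.Prime]

lemma exists_monic_lift (f : (ZMod p)[X]) (hf : f.Monic) :
    ∃ φ : ℤ_[p][X], red p φ = f ∧ φ.natDegree = f.natDegree ∧ φ.Monic := by
  have h : f ∈ lifts (PadicInt.toZMod (p := p)) := (mem_lifts _).mpr (map_surjective _ toZMod_surj f)
  obtain ⟨q, h1, h2, h3⟩ := lifts_and_natDegree_eq_and_monic h hf
  exact ⟨q, h1, h2, h3⟩

lemma exists_deg_lift (f : (ZMod p)[X]) :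
    ∃ φ : ℤ_[p][X], red p φ = f ∧ φ.natDegree = f.natDegree := by
  have h : f ∈ lifts (PadicInt.toZMod (p := p)) := (mem_lifts _).mpr (map_surjective _ toZMod_surj f)
  obtain ⟨q, h1, h2⟩ := exists_degree_eq_of_mem_lifts h
  exact ⟨q, h1, natDegree_eq_of_degree_eq h2⟩

/-- division by a monic polynomial whose reduction divides. -/
lemma exists_div (φ f : ℤ_[p][X]) (hφ : φ.Monic) (hd : 1 ≤ φ.natDegree) (h : red p φ ∣ red p f) :
    ∃ U, f = φ * (f /ₘ φ) + C (p : ℤ_[p]) * U ∧ U.natDegree < φ.natDegree := by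
  have h1 : red p (f %ₘ φ) = 0 := by
    rw [red, coe_mapRingHom, map_modByMonic _ hφ, (modByMonic_eq_zero_iff_dvd (hφ.map _))]
    exact h
  obtain ⟨U, hU⟩ := (red_eq_zero_iff _).mp h1
  refine ⟨U, ?_, ?_⟩
  · rw [← hU, add_comm, modByMonic_add_div]
  · have h2 : (f %ₘ φ).natDegree = U.natDegree := by
      rw [hU, natDegree_C_mul p_ne_zero']
    rw [← h2]
    exact natDegree_modByMonic_lt f hφ (fun h => by rw [h, natDegree_one] at hd; omega)

lemma decomp (n : ℕ) (P A D G : ℤ_[p][X]) (hPe : P = A * D ^ 2 + C (p : ℤ_[p]) * G)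
    (hPn : P.natDegree ≤ n)
    (hD : D.Monic) (hdeg : A.natDegree + 2 * D.natDegree ≤ n)
    (hnc : ¬ IsCoprime (red p D) (red p G)) :
    ∃ φ A' B E : ℤ_[p][X], φ.Monic ∧ 1 ≤ φ.natDegree ∧ A'.natDegree + 2 * φ.natDegree ≤ n ∧
      B.natDegree + φ.natDegree ≤ n ∧ E.natDegree < φ.natDegree ∧
      P = φ ^ 2 * A' + C (p : ℤ_[p]) * φ * B + C (p : ℤ_[p]) ^ 2 * E := by
  have hDm : (red p D).Monic := hD.map _
  have hg0 : gcd (red p D) (red p G) ≠ 0 := by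
    intro h
    exact hDm.ne_zero ((gcd_eq_zero_iff _ _).mp h).1
  have hgu : ¬ IsUnit (gcd (red p D) (red p G)) := by
    intro h; exact hnc ((gcd_isUnit_iff _ _).mp h)
  set f := normalize (gcd (red p D) (red p G)) with hf
  have hfm : f.Monic := monic_normalize hg0
  have hfD : f ∣ red p D := normalize_dvd_iff.mpr (gcd_dvd_left _ _)
  have hfG : f ∣ red p G := normalize_dvd_iff.mpr (gcd_dvd_right _ _)
  have hfu : ¬ IsUnit f := by rw [hf, (normalize_associated _).isUnit_iff]; exact hgu
  obtain ⟨φ, h1, h2, hφ⟩ := exists_monic_lift f hfm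
  have hd : 1 ≤ φ.natDegree := by
    rw [h2]
    by_contra hlt
    apply hfu
    rw [Polynomial.eq_C_of_natDegree_eq_zero (by omega : f.natDegree = 0), isUnit_C,
      isUnit_iff_ne_zero]
    intro h0
    apply hfm.ne_zero
    rw [Polynomial.eq_C_of_natDegree_eq_zero (by omega : f.natDegree = 0), h0, C_0]
  have hdj : φ.natDegree ≤ D.natDegree := by
    rw [h2, ← hD.natDegree_map (PadicInt.toZMod (p := p))]
    exact natDegree_le_of_dvd hfD hDm.ne_zero
  have hGn : G.natDegree ≤ n := by
    have : (C (p : ℤ_[p]) * G).natDegree ≤ n := by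
      have e : C (p : ℤ_[p]) * G = P - A * D ^ 2 := by rw [hPe]; ring
      rw [e]
      refine (natDegree_sub_le _ _).trans (max_le hPn ?_)
      refine natDegree_mul_le.trans ?_
      have := natDegree_pow_le (p := D) (n := 2)
      omega
    rwa [natDegree_C_mul p_ne_zero'] at this
  obtain ⟨U, hU, hUd⟩ := exists_div φ D hφ hd (by rw [h1]; exact hfD)
  obtain ⟨V, hV, hVd⟩ := exists_div φ G hφ hd (by rw [h1]; exact hfG)
  have hE := natDegree_divByMonic D hφ
  have hG1 := natDegree_divByMonic G hφ
  set E := D /ₘ φ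
  set G1 := G /ₘ φ
  set C0 := A * U ^ 2 + V with hC0
  have hq := natDegree_divByMonic C0 hφ
  have hr : (C0 %ₘ φ).natDegree < φ.natDegree :=
    natDegree_modByMonic_lt _ hφ (fun h => by rw [h, natDegree_one] at hd; omega)
  have hC0d : C0 = C0 %ₘ φ + φ * (C0 /ₘ φ) := (modByMonic_add_div _ _).symm
  set q := C0 /ₘ φ
  set r := C0 %ₘ φ
  have hC0n : C0.natDegree ≤ n := by
    refine (natDegree_add_le _ _).trans (max_le ?_ (by omega))
    refine natDegree_mul_le.trans ?_
    have := natDegree_pow_le (p := U) (n := 2)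
    omega
  refine ⟨φ, A * E ^ 2, 2 * A * E * U + G1 + C (p : ℤ_[p]) * q, r, hφ, hd, ?_, ?_, hr, ?_⟩
  · have h3 := natDegree_mul_le (p := A) (q := E ^ 2)
    have := natDegree_pow_le (p := E) (n := 2)
    omega
  · have h3 : (2 * A * E * U).natDegree ≤ n - φ.natDegree := by
      have e : 2 * A * E * U = C (2 : ℤ_[p]) * (A * E * U) := by rw [C_ofNat]; ring
      rw [e]
      refine (natDegree_C_mul_le _ _).trans ?_
      have h4 := natDegree_mul_le (p := A * E) (q := U)
      have h5 := natDegree_mul_le (p := A) (q := E)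
      omega
    have h4 : (C (p : ℤ_[p]) * q).natDegree ≤ n - φ.natDegree :=
      (natDegree_C_mul_le _ _).trans (by omega)
    have h5 : (2 * A * E * U + G1 + C (p : ℤ_[p]) * q).natDegree ≤ n - φ.natDegree :=
      natDegree_add_le_of_degree_le (natDegree_add_le_of_degree_le h3 (by omega)) h4
    omega
  · have e1 : P = φ ^ 2 * (A * E ^ 2) + C (p : ℤ_[p]) * φ * (2 * A * E * U + G1) +
        C (p : ℤ_[p]) ^ 2 * C0 := by
      rw [hPe, hC0]
      conv_lhs => rw [hU, hV]
      ring
    rw [e1]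
    conv_lhs => rw [hC0d]
    ring

lemma isIntegralElem_quad {R A : Type*} [CommRing R] [Nontrivial R] [CommRing A] (ψ : R →+* A) (x : A)
    (b e : R) (h : x ^ 2 - ψ b * x + ψ e = 0) : ψ.IsIntegralElem x := by
  refine ⟨X ^ 2 - C b * X + C e, ?_, ?_⟩
  · monicity!
  · simpa using h

lemma beta_integral {K : Type*} [CommRing K] [Algebra ℤ_[p] K] (t y q : K) (hty : t * y = 1)
    (hq : algebraMap ℤ_[p] K p * q = 1)
    (hrev : ∀ (N : ℕ) (g : ℤ_[p][X]), g.natDegree ≤ N → y ^ N * aeval t g = aeval y (reflect N g))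
    (n : ℕ) (φ A B E : ℤ_[p][X]) (hφ : φ.Monic) (hd : 1 ≤ φ.natDegree)
    (hA : A.natDegree + 2 * φ.natDegree ≤ n) (hB : B.natDegree + φ.natDegree ≤ n)
    (hE : E.natDegree < φ.natDegree)
    (h0 : aeval t (φ ^ 2 * A + C (p : ℤ_[p]) * φ * B + C (p : ℤ_[p]) ^ 2 * E) = 0) :
    IsIntegral ℤ_[p] (q * aeval t (φ * A + C (p : ℤ_[p]) * B)) := by
  set d := φ.natDegree with hdd
  set β := q * aeval t (φ * A + C (p : ℤ_[p]) * B) with hβ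
  simp only [map_add, map_mul, map_pow, aeval_C] at h0 hβ
  have hpβ : algebraMap ℤ_[p] K p * β = aeval t φ * aeval t A + algebraMap ℤ_[p] K p * aeval t B := by
    rw [hβ]
    linear_combination (aeval t φ * aeval t A + algebraMap ℤ_[p] K p * aeval t B) * hq
  have hφβ : aeval t φ * β = - (algebraMap ℤ_[p] K p * aeval t E) := by
    rw [hβ]
    linear_combination q * h0 - algebraMap ℤ_[p] K p * aeval t E * hq
  have hquad : β ^ 2 - aeval t B * β + aeval t A * aeval t E = 0 := by
    have h3 : algebraMap ℤ_[p] K p * (β ^ 2 - aeval t B * β + aeval t A * aeval t E) = 0 := by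
      linear_combination β * hpβ + aeval t A * hφβ
    calc _ = q * (algebraMap ℤ_[p] K p * (β ^ 2 - aeval t B * β + aeval t A * aeval t E)) := by
          linear_combination -(β ^ 2 - aeval t B * β + aeval t A * aeval t E) * hq
      _ = 0 := by rw [h3, mul_zero]
  refine isIntegral_of_both t y β hty ?_ ?_
  · refine isIntegralElem_quad _ β B (A * E) ?_
    change β ^ 2 - aeval t B * β + aeval t (A * E) = 0
    rw [map_mul]; exact hquad
  · have h1 : y ^ d * aeval t φ = aeval y (reflect d φ) := hrev _ _ le_rfl
    have h2 : y ^ (n - d) * aeval t B = aeval y (reflect (n - d) B) := hrev _ _ (by omega)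
    have h3 : y ^ d * aeval t E = aeval y (reflect d E) := hrev _ _ (by omega)
    have h4 : y ^ (n - d + (n - d)) * aeval t (A * E) = aeval y (reflect (n - d + (n - d)) (A * E)) :=
      hrev _ _ (natDegree_mul_le.trans (by omega))
    rw [map_mul] at h4
    have hi1 : (aeval y : ℤ_[p][X] →ₐ[ℤ_[p]] K).toRingHom.IsIntegralElem
        (aeval y (reflect d φ) * β) := by
      have : aeval y (reflect d φ) * β = aeval y (- (C (p : ℤ_[p]) * reflect d E)) := by
        rw [← h1, map_neg, map_mul, aeval_C, ← h3]
        linear_combination y ^ d * hφβ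
      rw [this]
      exact aeval_integralElem _ _
    have hi2 : (aeval y : ℤ_[p][X] →ₐ[ℤ_[p]] K).toRingHom.IsIntegralElem (y ^ (n - d) * β) := by
      refine isIntegralElem_quad _ _ (reflect (n - d) B) (reflect (n - d + (n - d)) (A * E)) ?_
      change (y ^ (n - d) * β) ^ 2 - aeval y (reflect (n - d) B) * (y ^ (n - d) * β) +
        aeval y (reflect (n - d + (n - d)) (A * E)) = 0
      rw [← h2, ← h4, pow_add]
      linear_combination (y ^ (n - d)) ^ 2 * hquad
    have hco : IsCoprime (reflect d φ) (X ^ (n - d)) := by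
      apply IsCoprime.pow_right
      have e : reflect d φ = X * (reflect d φ).divX + C ((reflect d φ).coeff 0) :=
        (X_mul_divX_add _).symm
      have e0 : (reflect d φ).coeff 0 = 1 := by
        rw [coeff_reflect, revAt_le (Nat.zero_le _), Nat.sub_zero, hdd]
        exact hφ
      rw [e0, C_1] at e
      exact ⟨1, -(reflect d φ).divX, by linear_combination e⟩
    obtain ⟨u, v, huv⟩ := hco
    have hβ2 : β = aeval y u * (aeval y (reflect d φ) * β) + aeval y v * (y ^ (n - d) * β) := by
      have := congrArg (aeval y) huv
      rw [map_add, map_mul, map_mul, map_pow, aeval_X, map_one] at this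
      linear_combination (-β) * this
    rw [hβ2]
    exact RingHom.IsIntegralElem.add _ (RingHom.IsIntegralElem.mul _ (aeval_integralElem _ _) hi1)
      (RingHom.IsIntegralElem.mul _ (aeval_integralElem _ _) hi2)

theorem not_isMax_of_not_coprime (n : ℕ) (c : ℕ → ℤ_[p]) (hcn : c n ≠ 0)
    (A D G : ℤ_[p][X]) (hPe : polyZ n c = A * D ^ 2 + C (p : ℤ_[p]) * G)
    (hP0 : red p (polyZ n c) ≠ 0) (hD : D.Monic) (hdeg : A.natDegree + 2 * D.natDegree ≤ n)
    (hnc : ¬ IsCoprime (red p D) (red p G)) :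
    ¬ IsMaxOrder ℤ_[p] ℚ_[p] n c := by
  obtain ⟨y, hy⟩ := exists_inv_theta n c hcn
  obtain ⟨φ, A', B, E, hφ, hd, hA, hB, hE, hPd⟩ :=
    decomp n _ A D G hPe (polyZ_natDegree_le n c) hD hdeg hnc
  obtain ⟨w, hw⟩ := isUnit_algebraMap_KF n c (p : ℤ_[p]) p_ne_zero'
  have hq : algebraMap ℤ_[p] (KF ℤ_[p] ℚ_[p] n c) p * ((w⁻¹ : (KF ℤ_[p] ℚ_[p] n c)ˣ) : KF ℤ_[p] ℚ_[p] n c) = 1 := by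
    rw [← hw, Units.mul_inv]
  generalize ((w⁻¹ : (KF ℤ_[p] ℚ_[p] n c)ˣ) : KF ℤ_[p] ℚ_[p] n c) = q at hq
  have h0 := aeval_polyZ n c
  rw [hPd] at h0
  have hInt := beta_integral (θF ℤ_[p] ℚ_[p] n c) y q hy hq (exists_rev n c y hy) n φ A' B E hφ hd hA hB hE h0
  intro hmax
  have hmem : q * aeval (θF ℤ_[p] ℚ_[p] n c) (φ * A' + C (p : ℤ_[p]) * B) ∈ RFmod ℤ_[p] ℚ_[p] n c := by
    rw [IsMaxOrder] at hmax
    rw [hmax, Subalgebra.mem_toSubmodule, mem_integralClosure_iff]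
    exact hInt
  obtain ⟨g, hg⟩ := mem_S_of_RF n c _ hmem
  have hz : aeval (θF ℤ_[p] ℚ_[p] n c) (φ * A' + C (p : ℤ_[p]) * B - C (p : ℤ_[p]) * g) = 0 := by
    rw [map_sub, map_mul _ (C (p : ℤ_[p])) g, ← hg, aeval_C, ← mul_assoc, hq, one_mul, sub_self]
  have hdvd := map_dvd (red p) (dvd_of_aeval_eq_zero n c hP0 _ hz)
  have e1 : red p (polyZ n c) = red p φ * (red p φ * red p A') := by
    rw [hPd]; simp only [map_add, map_mul, map_pow, red_Cp]; ring
  have e2 : red p (φ * A' + C (p : ℤ_[p]) * B - C (p : ℤ_[p]) * g) = red p φ * red p A' := by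
    simp only [map_add, map_sub, map_mul, red_Cp]; ring
  rw [e1] at hP0
  rw [e1, e2] at hdvd
  have hne : red p φ * red p A' ≠ 0 := right_ne_zero_of_mul hP0
  have hdg := natDegree_le_of_dvd hdvd hne
  rw [natDegree_mul (left_ne_zero_of_mul hP0) hne] at hdg
  have : (red p φ).natDegree = φ.natDegree := hφ.natDegree_map _
  omega
end KF4

section KF5
variable {p : ℕ} [Fact p.Prime]

lemma red_polyZ (n : ℕ) (c : ℕ → ℤ_[p]) : red p (polyZ n c) = polyZ n (fun i => PadicInt.toZMod (c i)) :=
  polyZ_map _ n c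

lemma primP_iff (n : ℕ) (c : ℕ → ℤ_[p]) : PrimP p n c ↔ red p (polyZ n c) ≠ 0 := by
  rw [red_polyZ, PrimP]
  constructor
  · rintro ⟨i, hi, hu⟩ h0
    have := congrArg (fun q => coeff q (n - i)) h0
    simp only [polyZ_coeff, if_pos (Nat.sub_le n i), coeff_zero] at this
    rw [Nat.sub_sub_self hi, toZMod_eq_zero_iff] at this
    exact (isUnit_iff_not_dvd _).mp hu this
  · intro h
    by_contra hcon
    push Not at hcon
    apply h
    ext k
    rw [polyZ_coeff, coeff_zero]
    split_ifs with hk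
    · rw [toZMod_eq_zero_iff]
      by_contra hd
      exact hcon (n - k) (Nat.sub_le _ _) ((isUnit_iff_not_dvd _).mpr hd)
    · rfl

lemma evenRam_iff (n : ℕ) (hn : Even n) (c : ℕ → ℤ_[p]) :
    EvenRamP p n c ↔ ∃ (κ : (ZMod p)ˣ) (h : (ZMod p)[X]), red p (polyZ n c) = C (κ : ZMod p) * h ^ 2 := by
  rw [EvenRamP]
  constructor
  · rintro ⟨κ, H, hH⟩
    refine ⟨κ, MvPolynomial.aeval ![X, 1] H, ?_⟩
    have := congrArg (MvPolynomial.aeval ![(X : (ZMod p)[X]), 1]) hH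
    rw [map_mul, map_pow, redForm, map_sum] at this
    rw [red_polyZ, polyZ]
    simpa using this
  · rintro ⟨κ, h, hh⟩
    obtain ⟨m, rfl⟩ := hn
    have hdeg : h.natDegree ≤ m := by
      by_cases h0 : h = 0
      · rw [h0, natDegree_zero]; exact Nat.zero_le _
      have h1 : (red p (polyZ (m + m) c)).natDegree ≤ m + m := by
        rw [red_polyZ]; exact polyZ_natDegree_le _ _
      rw [hh, natDegree_C_mul κ.ne_zero, natDegree_pow] at h1
      omega
    refine ⟨κ, homogenize h m, ?_⟩
    have h2 : homogenize (red p (polyZ (m + m) c)) (m + m) = redForm p (m + m) c := by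
      rw [red_polyZ, polyZ, homogenize_finsetSum, redForm]
      refine Finset.sum_congr rfl fun i hi => ?_
      have hi := Finset.mem_range.mp hi
      rw [homogenize_C_mul, homogenize_X_pow (by omega), mul_assoc]
      congr 3
      omega
    rw [← h2, hh, homogenize_C_mul, sq, homogenize_mul _ _ hdeg hdeg, sq]

theorem not_isMax_of_sq (n : ℕ) (hn : 2 ≤ n) (heven : Even n) (c : ℕ → ℤ_[p]) (hcn : c n ≠ 0)
    (hc0 : c 0 ≠ 0) (h2 : (p : ℤ_[p]) ^ 2 ∣ c 0) (hP0 : red p (polyZ n c) ≠ 0) (hE : EvenRamP p n c) :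
    ¬ IsMaxOrder ℤ_[p] ℚ_[p] n c := by
  obtain ⟨κ, h, hh⟩ := (evenRam_iff n heven c).mp hE
  obtain ⟨e, he⟩ := h2
  have he0 : e ≠ 0 := by rintro rfl; exact hc0 (by rw [he, mul_zero])
  have hc1 : (p : ℤ_[p]) ∣ c 1 := by
    rw [← toZMod_eq_zero_iff]
    have hd : (red p (polyZ n c)).natDegree = 2 * h.natDegree := by
      rw [hh, natDegree_C_mul κ.ne_zero, natDegree_pow]
    have hle : (red p (polyZ n c)).natDegree ≤ n := by
      rw [red_polyZ]; exact polyZ_natDegree_le _ _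
    have hlt : (red p (polyZ n c)).natDegree ≠ n := by
      intro hcon
      have : (red p (polyZ n c)).coeff n = 0 := by
        rw [red_polyZ, polyZ_coeff, if_pos le_rfl, Nat.sub_self, toZMod_eq_zero_iff, he]
        exact ⟨p * e, by ring⟩
      nth_rewrite 2 [← hcon] at this
      exact hP0 (leadingCoeff_eq_zero.mp this)
    obtain ⟨m, hm⟩ := heven
    have h3 : (red p (polyZ n c)).coeff (n - 1) = 0 := coeff_eq_zero_of_natDegree_lt (by omega)
    rw [red_polyZ, polyZ_coeff, if_pos (Nat.sub_le _ _)] at h3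
    rwa [Nat.sub_sub_self (by omega)] at h3
  obtain ⟨c1, hc1⟩ := hc1
  obtain ⟨y, hy⟩ := exists_inv_theta n c hcn
  intro hmax
  have h0 := aeval_polyZ n c
  -- the quadratic equation
  have hpoly : polyZ n c = C (c 0) * X ^ n + C (c 1) * X ^ (n - 1) +
      ∑ i ∈ Finset.range (n - 1), C (c (i + 2)) * X ^ (n - 2 - i) := by
    rw [polyZ]
    have : n + 1 = (n - 1) + 1 + 1 := by omega
    rw [this, Finset.sum_range_succ', Finset.sum_range_succ']
    have e2 : ∀ i ∈ Finset.range (n - 1), C (c (i + 1 + 1)) * (X : ℤ_[p][X]) ^ (n - (i + 1 + 1)) =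
        C (c (i + 2)) * X ^ (n - 2 - i) := by
      intro i _
      have : n - (i + 1 + 1) = n - 2 - i := by omega
      rw [this]
    rw [Finset.sum_congr rfl e2, Nat.sub_zero, zero_add]
    ring
  have hQ : ∃ Q : ℤ_[p][X], Q.natDegree ≤ n - 2 ∧
      polyZ n c = C (c 0) * X ^ n + C (c 1) * X ^ (n - 1) + Q := by
    refine ⟨_, ?_, hpoly⟩
    refine natDegree_sum_le_of_forall_le _ _ fun i _ => ?_
    exact (natDegree_C_mul_X_pow_le _ _).trans (Nat.sub_le _ _)
  obtain ⟨Q, hQd, hQ⟩ := hQ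
  have hr := exists_rev n c y hy (n - 2) Q hQd
  set t := θF ℤ_[p] ℚ_[p] n c with ht
  have hint2 : (aeval y : ℤ_[p][X] →ₐ[ℤ_[p]] _).toRingHom.IsIntegralElem (aeval t (C ((p : ℤ_[p]) * e) * X)) := by
    refine isIntegralElem_quad _ _ (-C c1) (C e * reflect (n - 2) Q) ?_
    change (aeval t (C ((p : ℤ_[p]) * e) * X)) ^ 2 - aeval y (-C c1) * aeval t (C ((p : ℤ_[p]) * e) * X) +
      aeval y (C e * reflect (n - 2) Q) = 0
    rw [hQ, hc1, he] at h0
    simp only [map_add, map_mul, map_pow, aeval_C, aeval_X, map_neg] at h0 ⊢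
    rw [← hr]
    have e1 : t ^ n = t ^ 2 * t ^ (n - 2) := by rw [← pow_add]; congr 1; omega
    have e2 : t ^ (n - 1) = t * t ^ (n - 2) := by rw [← pow_succ']; congr 1; omega
    have e3 : y ^ (n - 2) * t ^ (n - 2) = 1 := by rw [← mul_pow, mul_comm, hy, one_pow]
    rw [e1, e2] at h0
    linear_combination (y ^ (n - 2) * algebraMap ℤ_[p] _ e) * h0 -
      (algebraMap ℤ_[p] _ p ^ 2 * algebraMap ℤ_[p] _ e ^ 2 * t ^ 2 + 
      algebraMap ℤ_[p] _ e * algebraMap ℤ_[p] _ p * algebraMap ℤ_[p] _ c1 * t) * e3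
  have hInt := (isIntegral_both_iff n c y hy _).mpr ⟨aeval_integralElem _ _, hint2⟩
  have hmem : aeval t (C ((p : ℤ_[p]) * e) * X) ∈ RFmod ℤ_[p] ℚ_[p] n c := by
    rw [IsMaxOrder] at hmax
    rw [hmax, Subalgebra.mem_toSubmodule, mem_integralClosure_iff]
    exact hInt
  obtain ⟨g, hg⟩ := mem_S'_of_RF n c y hy _ hmem
  set N := g.natDegree with hN
  have hrd : (reflect N g).natDegree ≤ N := (natDegree_reflect_le (p := g) (N := N)).trans (by simp [hN])
  have h1 := exists_rev n c y hy N (reflect N g) hrd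
  rw [reflect_reflect, ← hg] at h1
  have hz : aeval t (C ((p : ℤ_[p]) * e) * X ^ (N + 1) - reflect N g) = 0 := by
    have h5 : aeval t (reflect N g) = t ^ N * (y ^ N * aeval t (reflect N g)) := by
      rw [← mul_assoc, ← mul_pow, hy, one_pow, one_mul]
    rw [map_sub, h5, ht, h1, ← ht]
    simp only [map_mul, map_pow, aeval_X, aeval_C]
    ring
  obtain ⟨w, hw⟩ := dvd_of_aeval_eq_zero n c hP0 _ hz
  have hpe : (p : ℤ_[p]) * e ≠ 0 := mul_ne_zero p_ne_zero' he0
  have hlc := congrArg leadingCoeff hw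
  rw [leadingCoeff_sub_of_degree_lt, leadingCoeff_C_mul_X_pow, leadingCoeff_mul] at hlc
  · have hl : (polyZ n c).leadingCoeff = c 0 := by
      have hnd : (polyZ n c).natDegree = n := by
        refine le_antisymm (polyZ_natDegree_le n c) (le_natDegree_of_ne_zero ?_)
        rw [polyZ_coeff, if_pos le_rfl, Nat.sub_self]; exact hc0
      rw [leadingCoeff, hnd, polyZ_coeff, if_pos le_rfl, Nat.sub_self]
    rw [hl, he] at hlc
    have : (p : ℤ_[p]) * e * 1 = (p : ℤ_[p]) * e * (p * w.leadingCoeff) := by linear_combination hlc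
    have h7 := mul_left_cancel₀ hpe this
    have : IsUnit (p : ℤ_[p]) := IsUnit.of_mul_eq_one _ h7.symm
    exact (isUnit_iff_not_dvd _).mp this dvd_rfl
  · rw [degree_C_mul_X_pow _ hpe]
    have h8 : (reflect N g).degree ≤ (N : WithBot ℕ) := degree_le_of_natDegree_le hrd
    exact lt_of_le_of_lt h8 (by exact_mod_cast Nat.lt_succ_self N)
end KF5

section Meas
variable {p : ℕ} [Fact p.Prime]

instance haarP_isAddHaar (n : ℕ) : Measure.IsAddHaarMeasure (haarP p n) := by
  unfold haarP; infer_instance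

lemma haarP_univ (n : ℕ) : haarP p n Set.univ = 1 := by
  unfold haarP
  exact Measure.addHaarMeasure_self (K₀ := ⟨⟨Set.univ, isCompact_univ⟩, _⟩)

instance haarP_prob (n : ℕ) : IsProbabilityMeasure (haarP p n) := ⟨haarP_univ n⟩

/-- A measurable set meeting each translate-orbit boundedly often is null. -/
lemma null_of_translates (n : ℕ) (E : Set (Fin n → ℤ_[p])) (hE : MeasurableSet E)
    (e : Fin n → ℤ_[p]) (B : ℕ)
    (hB : ∀ v : Fin n → ℤ_[p], ∀ s : Finset ℕ, (∀ k ∈ s, (k • e + v) ∈ E) → s.card ≤ B) :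
    haarP p n E = 0 := by
  have key : ∀ M : ℕ, (M : ENNReal) * haarP p n E ≤ B := by
    intro M
    have h1 : ∀ k : ℕ, haarP p n E =
        ∫⁻ v, ((fun h => k • e + h) ⁻¹' E).indicator (fun _ => (1 : ENNReal)) v ∂(haarP p n) := by
      intro k
      have := lintegral_indicator_one (μ := haarP p n) (measurable_const_add (k • e) hE)
      rw [measure_preimage_add] at this
      exact this.symm
    calc (M : ENNReal) * haarP p n E = ∑ k ∈ Finset.range M, haarP p n E := by
          rw [Finset.sum_const, Finset.card_range, nsmul_eq_mul]
      _ = ∑ k ∈ Finset.range M, ∫⁻ v, ((fun h => k • e + h) ⁻¹' E).indicator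
            (fun _ => (1 : ENNReal)) v ∂(haarP p n) := Finset.sum_congr rfl fun k _ => h1 k
      _ = ∫⁻ v, ∑ k ∈ Finset.range M, ((fun h => k • e + h) ⁻¹' E).indicator
            (fun _ => (1 : ENNReal)) v ∂(haarP p n) := by
          rw [lintegral_finsetSum]
          intro k _
          exact measurable_const.indicator (measurable_const_add _ hE)
      _ ≤ ∫⁻ v, (B : ENNReal) ∂(haarP p n) := by
          refine lintegral_mono fun v => ?_
          have : ∑ k ∈ Finset.range M, ((fun h => k • e + h) ⁻¹' E).indicator
            (fun _ => (1 : ENNReal)) v = (((Finset.range M).filter fun k : ℕ => (k • e + v) ∈ E).card : ENNReal) := by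
            rw [Finset.card_filter]
            push_cast
            refine Finset.sum_congr rfl fun k _ => ?_
            simp [Set.indicator_apply]
          rw [this]
          exact Nat.cast_le.mpr (hB v _ fun k hk => (Finset.mem_filter.mp hk).2)
      _ = B := by rw [lintegral_const, haarP_univ, mul_one]
  by_contra h0
  have hfin : haarP p n E ≠ ⊤ := measure_ne_top _ _
  have h2 : ∀ M : ℕ, (M : ℝ) * (haarP p n E).toReal ≤ B := by
    intro M
    have := ENNReal.toReal_mono (ENNReal.natCast_ne_top B) (key M)
    simpa using this
  have hpos : 0 < (haarP p n E).toReal := ENNReal.toReal_pos h0 hfin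
  obtain ⟨M, hM⟩ := exists_nat_gt ((B : ℝ) / (haarP p n E).toReal)
  rw [div_lt_iff₀ hpos] at hM
  exact absurd (h2 M) (not_le.mpr hM)

lemma consF0_zero (n : ℕ) (f0 : ℤ_[p]) (v : Fin n → ℤ_[p]) : consF0 p n f0 v 0 = f0 := by
  simp [consF0]

lemma consF0_succ (n : ℕ) (f0 : ℤ_[p]) (v : Fin n → ℤ_[p]) (i : ℕ) (hi : i < n) :
    consF0 p n f0 v (i + 1) = v ⟨i, hi⟩ := by
  simp [consF0, hi]

lemma consF0_cont (n : ℕ) (f0 : ℤ_[p]) (j : ℕ) : Continuous fun v => consF0 p n f0 v j := by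
  unfold consF0
  by_cases h0 : j = 0
  · simp only [h0, if_true]; exact continuous_const
  · by_cases h1 : j - 1 < n
    · simp only [h0, h1, if_false, dif_pos]; exact continuous_apply _
    · simp only [h0, h1, if_false]; exact continuous_const

lemma binPoly_natDegree (n : ℕ) (c : ℕ → ℤ_[p]) (h0 : c 0 ≠ 0) :
    (binPoly ℤ_[p] ℚ_[p] n c).natDegree = n := by
  rw [binPoly_eq, natDegree_map_eq_of_injective (IsFractionRing.injective _ _)]
  refine le_antisymm (polyZ_natDegree_le n c) (le_natDegree_of_ne_zero ?_)
  rw [polyZ_coeff, if_pos le_rfl, Nat.sub_self]; exact h0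

lemma sep_iff (n : ℕ) (c : ℕ → ℤ_[p]) (h0 : c 0 ≠ 0) :
    SepDegP p n c ↔ resultant (polyZ n c) (derivative (polyZ n c)) n (n - 1) ≠ 0 := by
  have hd := binPoly_natDegree n c h0
  have hd' : (derivative (binPoly ℤ_[p] ℚ_[p] n c)).natDegree = n - 1 := by
    rw [natDegree_derivative, hd]
  have hb0 : binPoly ℤ_[p] ℚ_[p] n c ≠ 0 := by
    intro h
    have := congrArg (fun q => coeff q n) h
    simp only [binPoly_eq, coeff_map, polyZ_coeff, if_pos le_rfl, Nat.sub_self, coeff_zero] at this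
    exact h0 ((map_eq_zero_iff _ (IsFractionRing.injective ℤ_[p] ℚ_[p])).mp this)
  have h2 : algebraMap ℤ_[p] ℚ_[p] (resultant (polyZ n c) (derivative (polyZ n c)) n (n - 1)) =
      resultant (binPoly ℤ_[p] ℚ_[p] n c) (derivative (binPoly ℤ_[p] ℚ_[p] n c)) := by
    rw [hd, hd', binPoly_eq, derivative_map, resultant_map_map]
  have h3 : resultant (binPoly ℤ_[p] ℚ_[p] n c) (derivative (binPoly ℤ_[p] ℚ_[p] n c)) = 0 ↔
      ¬ (binPoly ℤ_[p] ℚ_[p] n c).Separable := by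
    rw [resultant_eq_zero_iff]
    exact and_iff_right (Or.inl hb0)
  rw [← h2, map_eq_zero_iff _ (IsFractionRing.injective ℤ_[p] ℚ_[p])] at h3
  rw [SepDegP, and_iff_left hd, Ne, h3, not_not]

lemma resultant_cont (n : ℕ) (f0 : ℤ_[p]) : Continuous fun v : Fin n → ℤ_[p] =>
    resultant (polyZ n (consF0 p n f0 v)) (derivative (polyZ n (consF0 p n f0 v))) n (n - 1) := by
  have hc : ∀ k, Continuous fun v : Fin n → ℤ_[p] => (polyZ n (consF0 p n f0 v)).coeff k := by
    intro k
    simp only [polyZ_coeff]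
    split_ifs
    · exact consF0_cont n f0 _
    · exact continuous_const
  have hc' : ∀ k, Continuous fun v : Fin n → ℤ_[p] => (derivative (polyZ n (consF0 p n f0 v))).coeff k := by
    intro k
    simp only [coeff_derivative]
    exact (hc _).mul continuous_const
  unfold resultant
  refine Continuous.matrix_det ?_
  refine continuous_matrix fun i j => ?_
  unfold sylvester
  simp only [Matrix.of_apply]
  refine Fin.addCases (fun j₁ => ?_) (fun j₁ => ?_) j
  · simp only [Fin.addCases_left]
    split_ifs
    · exact hc' _
    · exact continuous_const
  · simp only [Fin.addCases_right]
    split_ifs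
    · exact hc _
    · exact continuous_const

lemma null_last (n : ℕ) (hn : 0 < n) (f0 : ℤ_[p]) :
    haarP p n {v | consF0 p n f0 v n = 0} = 0 := by
  have hcl : IsClosed {v : Fin n → ℤ_[p] | consF0 p n f0 v n = 0} :=
    isClosed_singleton.preimage (consF0_cont n f0 n)
  obtain ⟨m, rfl⟩ : ∃ m, n = m + 1 := ⟨n - 1, by omega⟩
  refine null_of_translates _ _ hcl.measurableSet (fun _ => 1) 1 ?_
  intro v s hs
  rw [Finset.card_le_one]
  intro a ha b hb
  have ha := hs a ha
  have hb := hs b hb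
  simp only [Set.mem_ofPred_eq, consF0_succ _ _ _ m (Nat.lt_succ_self m), Pi.add_apply, Pi.smul_apply] at ha hb
  have h3 := add_right_cancel (ha.trans hb.symm)
  rw [nsmul_one, nsmul_one] at h3
  exact_mod_cast h3

lemma null_sep (n : ℕ) (hn : 0 < n) (f0 : ℤ_[p]) (hf0 : f0 ≠ 0) :
    haarP p n {v | ¬ SepDegP p n (consF0 p n f0 v)} = 0 := by
  have e : {v | ¬ SepDegP p n (consF0 p n f0 v)} = {v | resultant (polyZ n (consF0 p n f0 v))
      (derivative (polyZ n (consF0 p n f0 v))) n (n - 1) = 0} := by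
    ext v
    rw [Set.mem_ofPred_eq, Set.mem_ofPred_eq, sep_iff _ _ (by rw [consF0_zero]; exact hf0), not_not]
  have hcl : IsClosed {v | ¬ SepDegP p n (consF0 p n f0 v)} := by
    rw [e]
    exact isClosed_singleton.preimage (resultant_cont n f0)
  obtain ⟨m, rfl⟩ : ∃ m, n = m + 1 := ⟨n - 1, by omega⟩
  refine null_of_translates _ _ hcl.measurableSet (Pi.single (Fin.last m) 1) (m + 1) ?_
  intro v s hs
  set Ω := AlgebraicClosure ℚ_[p]
  set F := binPoly ℤ_[p] ℚ_[p] (m + 1) (consF0 p (m + 1) f0 v) with hF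
  have hFd : F.natDegree = m + 1 := binPoly_natDegree _ _ (by rw [consF0_zero]; exact hf0)
  have hshift : ∀ k : ℕ, binPoly ℤ_[p] ℚ_[p] (m + 1)
      (consF0 p (m + 1) f0 (k • Pi.single (Fin.last m) 1 + v)) = F + C (k : ℚ_[p]) := by
    intro k
    rw [hF, binPoly_eq, binPoly_eq]
    ext i
    rw [coeff_add, coeff_map, coeff_map, polyZ_coeff, polyZ_coeff, coeff_C]
    by_cases hi : i ≤ m + 1
    · rw [if_pos hi, if_pos hi]
      rcases Nat.eq_zero_or_pos i with rfl | hi0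
      · rw [Nat.sub_zero, consF0_succ _ _ _ m (Nat.lt_succ_self m), consF0_succ _ _ _ m (Nat.lt_succ_self m),
          if_pos rfl]
        have : (⟨m, Nat.lt_succ_self m⟩ : Fin (m + 1)) = Fin.last m := rfl
        rw [this]
        simp [add_comm]
      · rw [if_neg (by omega), add_zero]
        rcases Nat.eq_zero_or_pos (m + 1 - i) with h | h
        · rw [h, consF0_zero, consF0_zero]
        · obtain ⟨j, hj⟩ : ∃ j, m + 1 - i = j + 1 := ⟨m + 1 - i - 1, by omega⟩
          rw [hj, consF0_succ _ _ _ j (by omega), consF0_succ _ _ _ j (by omega)]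
          have : (⟨j, by omega⟩ : Fin (m + 1)) ≠ Fin.last m := by
            intro h; have := congrArg Fin.val h; simp at this; omega
          simp [this]
    · rw [if_neg hi, if_neg hi, if_neg (by omega)]; simp
  have hF'0 : (derivative F).map (algebraMap ℚ_[p] Ω) ≠ 0 := by
    rw [Ne, Polynomial.map_eq_zero]
    intro h
    have := derivative_eq_zero.mp h
    omega
  set R := ((derivative F).map (algebraMap ℚ_[p] Ω)).roots.toFinset with hR
  have hRc : R.card ≤ m + 1 := by
    refine (Multiset.toFinset_card_le _).trans ((card_roots' _).trans ?_)
    rw [natDegree_map]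
    exact (natDegree_derivative_le F).trans (by omega)
  refine le_trans ?_ hRc
  have hex : ∀ k ∈ s, ∃ α ∈ R, (k : Ω) = - aeval α F := by
    intro k hk
    have hk := hs k hk
    rw [Set.mem_ofPred_eq, SepDegP, and_iff_left (binPoly_natDegree _ _ (by rw [consF0_zero]; exact hf0)),
      hshift, Separable] at hk
    rw [← Polynomial.isCoprime_map (algebraMap ℚ_[p] Ω)] at hk
    obtain ⟨α, h1, h2⟩ : ∃ α, eval α ((F + C (k : ℚ_[p])).map (algebraMap ℚ_[p] Ω)) = 0 ∧
        eval α ((derivative (F + C (k : ℚ_[p]))).map (algebraMap ℚ_[p] Ω)) = 0 := by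
      by_contra hcon
      push Not at hcon
      apply hk
      rw [Polynomial.isCoprime_map]
      rw [isCoprime_iff_aeval_ne_zero_of_isAlgClosed _ Ω]
      intro a
      by_cases h : aeval a (F + C (k : ℚ_[p])) = 0
      · right
        have := hcon a (by rwa [eval_map_algebraMap])
        rwa [eval_map_algebraMap] at this
      · exact Or.inl h
    refine ⟨α, ?_, ?_⟩
    · rw [hR, Multiset.mem_toFinset, mem_roots hF'0, IsRoot.def]
      simpa using h2
    · rw [Polynomial.map_add, eval_add, eval_map_algebraMap] at h1
      simp at h1
      exact eq_neg_of_add_eq_zero_right h1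
  choose! α hα1 hα2 using hex
  refine Finset.card_le_card_of_injOn α (fun k hk => hα1 k hk) ?_
  intro a ha b hb hab
  have : (a : Ω) = b := by rw [hα2 a (Finset.mem_coe.mp ha), hα2 b (Finset.mem_coe.mp hb), hab]
  exact_mod_cast this
end Meas

section Meas2
variable {p : ℕ} [Fact p.Prime]

/-- the residue classes mod `p²` -/
def Fib (n : ℕ) (L : (Fin n → ZMod p) → Fin n → ℤ_[p]) (ab : (Fin n → ZMod p) × (Fin n → ZMod p)) :
    Set (Fin n → ℤ_[p]) :=
  {v | ∃ w : Fin n → ℤ_[p], (∀ i, PadicInt.toZMod (w i) = ab.2 i) ∧ ∀ i, v i = L ab.1 i + p * w i}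

variable {n : ℕ} {L : (Fin n → ZMod p) → Fin n → ℤ_[p]} (hL : ∀ a i, PadicInt.toZMod (L a i) = a i)

lemma Fib_cover (v : Fin n → ℤ_[p]) (hL : ∀ a i, PadicInt.toZMod (L a i) = a i) : ∃ ab, v ∈ Fib n L ab := by
  have h : ∀ i, ∃ w : ℤ_[p], v i - L (fun i => PadicInt.toZMod (v i)) i = p * w := by
    intro i
    have : PadicInt.toZMod (v i - L (fun i => PadicInt.toZMod (v i)) i) = 0 := by
      rw [map_sub, hL, sub_self]
    exact (toZMod_eq_zero_iff _).mp this
  choose w hw using h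
  exact ⟨(fun i => PadicInt.toZMod (v i), fun i => PadicInt.toZMod (w i)), w, fun i => rfl,
    fun i => by rw [← hw]; ring⟩

lemma Fib_unique (v : Fin n → ℤ_[p]) (hL : ∀ a i, PadicInt.toZMod (L a i) = a i) (ab ab')
    (h : v ∈ Fib n L ab) (h' : v ∈ Fib n L ab') : ab = ab' := by
  obtain ⟨a, b⟩ := ab
  obtain ⟨a', b'⟩ := ab'
  obtain ⟨w, h1, h2⟩ := h
  obtain ⟨w', h1', h2'⟩ := h'
  have key : ∀ (a : Fin n → ZMod p) i (x : ℤ_[p]), PadicInt.toZMod (L a i + (p : ℤ_[p]) * x) = a i := by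
    intro a i x
    rw [map_add, hL, (toZMod_eq_zero_iff _).mpr (dvd_mul_right _ _), add_zero]
  have ha : a = a' := by
    funext i
    rw [← key a i (w i), ← key a' i (w' i)]
    exact congrArg _ ((h2 i).symm.trans (h2' i))
  subst ha
  have hw : w = w' := by
    funext i
    have := (h2 i).symm.trans (h2' i)
    exact mul_left_cancel₀ p_ne_zero' (add_left_cancel this)
  subst hw
  have hb : b = b' := by
    funext i
    exact (h1 i).symm.trans (h1' i)
  rw [hb]

lemma Fib_eq (ab : (Fin n → ZMod p) × (Fin n → ZMod p)) : ∃ g : Fin n → ℤ_[p],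
    Fib n L ab = (fun h => g + h) ⁻¹' {u | ∀ i, (p : ℤ_[p]) ^ 2 ∣ u i} := by
  choose l hl using fun i => toZMod_surj (p := p) (ab.2 i)
  refine ⟨fun i => - (L ab.1 i + p * l i), ?_⟩
  ext v
  constructor
  · rintro ⟨w, h1, h2⟩ i
    have : (p : ℤ_[p]) ∣ w i - l i := by
      rw [← toZMod_eq_zero_iff, map_sub, h1, hl, sub_self]
    obtain ⟨e, he⟩ := this
    refine ⟨e, ?_⟩
    change -(L ab.1 i + p * l i) + v i = _
    rw [h2]
    linear_combination (p : ℤ_[p]) * he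
  · intro h
    choose e he using h
    refine ⟨fun i => l i + p * e i, fun i => ?_, fun i => ?_⟩
    · rw [map_add, hl, (toZMod_eq_zero_iff _).mpr (dvd_mul_right _ _), add_zero]
    · have := he i
      change -(L ab.1 i + p * l i) + v i = _ at this
      linear_combination this

lemma measurable_U : MeasurableSet {u : Fin n → ℤ_[p] | ∀ i, (p : ℤ_[p]) ^ 2 ∣ u i} := by
  have : IsClosed {u : Fin n → ℤ_[p] | ∀ i, (p : ℤ_[p]) ^ 2 ∣ u i} := by
    have e : {u : Fin n → ℤ_[p] | ∀ i, (p : ℤ_[p]) ^ 2 ∣ u i} =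
        ⋂ i, {u | ‖u i‖ ≤ (p : ℝ) ^ (-(2 : ℕ) : ℤ)} := by
      ext u
      simp only [Set.mem_iInter, Set.mem_ofPred_eq, PadicInt.norm_le_pow_iff_mem_span_pow,
        Ideal.mem_span_singleton]
    rw [e]
    refine isClosed_iInter fun i => isClosed_le (continuous_norm.comp (continuous_apply i)) continuous_const
  exact this.measurableSet

lemma Fib_measurable (ab) : MeasurableSet (Fib n L ab) := by
  obtain ⟨g, hg⟩ := Fib_eq (L := L) ab
  rw [hg]
  exact measurable_const_add _ measurable_U

lemma Fib_measure (hL : ∀ a i, PadicInt.toZMod (L a i) = a i) (ab) :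
    (haarP p n (Fib n L ab)).toReal = 1 / (p : ℝ) ^ (2 * n) := by
  have h1 : ∀ ab, haarP p n (Fib n L ab) = haarP p n {u | ∀ i, (p : ℤ_[p]) ^ 2 ∣ u i} := by
    intro ab
    obtain ⟨g, hg⟩ := Fib_eq (L := L) ab
    rw [hg, measure_preimage_add]
  have h2 : haarP p n Set.univ = ∑ ab, haarP p n (Fib n L ab) := by
    rw [← tsum_fintype (L := .unconditional _), ← measure_iUnion]
    · congr 1
      ext v
      simpa using Fib_cover v hL
    · intro ab ab' hne
      exact Set.disjoint_left.mpr fun v h h' => hne (Fib_unique v hL _ _ h h')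
    · exact fun ab => Fib_measurable ab
  simp only [h1, Finset.sum_const, haarP_univ] at h2
  rw [h1]
  have h3 := congrArg ENNReal.toReal h2
  have hcard : (Finset.univ : Finset ((Fin n → ZMod p) × (Fin n → ZMod p))).card = p ^ (2 * n) := by
    rw [Finset.card_univ, Fintype.card_prod, Fintype.card_fun, ZMod.card, Fintype.card_fin]
    ring
  rw [hcard, nsmul_eq_mul, ENNReal.toReal_mul] at h3
  have hp : (p : ℝ) ^ (2 * n) ≠ 0 := pow_ne_zero _ (by exact_mod_cast (Fact.out : p.Prime).ne_zero)
  rw [eq_div_iff hp, mul_comm]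
  simpa using h3.symm

lemma measure_count (hL : ∀ a i, PadicInt.toZMod (L a i) = a i) (S : Set (Fin n → ℤ_[p]))
    (T : (Fin n → ZMod p) → (Fin n → ZMod p) → Prop)
    (H : ∀ᵐ v ∂(haarP p n), ∀ a b, v ∈ Fib n L (a, b) → (v ∈ S ↔ T a b)) :
    (haarP p n S).toReal = (∑ a, (Nat.card {b // T a b} : ℝ)) / (p : ℝ) ^ (2 * n) := by
  have h1 : haarP p n S = haarP p n (⋃ ab ∈ (Finset.univ.filter fun ab : (Fin n → ZMod p) × (Fin n → ZMod p) => T ab.1 ab.2), Fib n L ab) := by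
    refine measure_congr ?_
    filter_upwards [H] with v hv
    refine propext ?_
    change v ∈ S ↔ v ∈ (⋃ ab ∈ (Finset.univ.filter fun ab : (Fin n → ZMod p) × (Fin n → ZMod p) => T ab.1 ab.2), Fib n L ab)
    obtain ⟨⟨a, b⟩, hab⟩ := Fib_cover v hL
    rw [hv a b hab]
    simp only [Finset.mem_filter, Finset.mem_univ, true_and, Set.mem_iUnion, exists_prop]
    constructor
    · intro h
      exact ⟨(a, b), h, hab⟩
    · rintro ⟨ab', h, h'⟩
      rw [← Fib_unique v hL _ _ hab h'] at h
      exact h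
  rw [h1, measure_biUnion_finset, ENNReal.toReal_sum]
  · simp only [Fib_measure hL]
    rw [Finset.sum_const, nsmul_eq_mul, mul_one_div]
    congr 1
    rw [← Nat.cast_sum]
    congr 1
    rw [← Nat.card_sigma, ← Fintype.card_subtype, ← Nat.card_eq_fintype_card]
    refine Nat.card_congr ?_
    exact ⟨fun x => ⟨x.1.1, x.1.2, x.2⟩, fun x => ⟨(x.1, x.2.1), x.2.2⟩, fun x => rfl, fun x => rfl⟩
  · exact fun _ _ => measure_ne_top _ _
  · intro ab _ ab' _ hne
    exact Set.disjoint_left.mpr fun v h h' => hne (Fib_unique v hL _ _ h h')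
  · exact fun ab _ => Fib_measurable ab
end Meas2

section Cnt
set_option linter.unusedSectionVars false
variable {k : Type} [Field k] [Fintype k]

/-- polynomial of degree `< n` with prescribed coefficients (descending order) -/
def pol (n : ℕ) (a : Fin n → k) : k[X] := ∑ i : Fin n, C (a i) * X ^ (n - 1 - (i : ℕ))

lemma pol_coeff (n : ℕ) (a : Fin n → k) (m : ℕ) :
    (pol n a).coeff m = if h : m < n then a ⟨n - 1 - m, by omega⟩ else 0 := by
  unfold pol
  rw [finsetSum_coeff]
  simp only [coeff_C_mul, coeff_X_pow]
  split_ifs with h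
  · rw [Finset.sum_eq_single ⟨n - 1 - m, by omega⟩]
    · rw [if_pos, mul_one]
      simp only
      omega
    · intro i _ hi
      rw [if_neg, mul_zero]
      intro h2
      apply hi
      ext
      simp only
      have := i.2
      omega
    · intro h2
      exact absurd (Finset.mem_univ _) h2
  · refine Finset.sum_eq_zero fun i _ => ?_
    rw [if_neg, mul_zero]
    have := i.2
    omega

lemma pol_inj (n : ℕ) : Function.Injective (pol (k := k) n) := by
  intro a b h
  funext i
  have := congrArg (fun f => coeff f (n - 1 - (i : ℕ))) h
  simp only [pol_coeff] at this
  have hi := i.2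
  rw [dif_pos (by omega), dif_pos (by omega)] at this
  have e : (⟨n - 1 - (n - 1 - (i : ℕ)), by omega⟩ : Fin n) = i := by
    ext
    simp only
    omega
  rwa [e] at this

lemma pol_degree (n : ℕ) (a : Fin n → k) : (pol n a).degree < n := by
  rw [degree_lt_iff_coeff_zero]
  intro m hm
  rw [pol_coeff, dif_neg (by omega)]

lemma pol_surj (n : ℕ) (f : k[X]) (hf : f.degree < n) : ∃ a, pol n a = f := by
  refine ⟨fun i => f.coeff (n - 1 - i), ?_⟩
  ext m
  rw [pol_coeff]
  split_ifs with h
  · congr 1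
    simp only
    omega
  · rw [degree_lt_iff_coeff_zero] at hf
    exact (hf m (by omega)).symm

/-- polynomials of degree `< n` -/
def Ls (k : Type) [Field k] [Fintype k] (n : ℕ) : Finset k[X] := Finset.univ.image (pol n)

/-- monic polynomials of degree `n` -/
def Ms (k : Type) [Field k] [Fintype k] (n : ℕ) : Finset k[X] := (Ls k n).image (fun f => X ^ n + f)

lemma mem_Ls (n : ℕ) (f : k[X]) : f ∈ Ls k n ↔ f.degree < n := by
  unfold Ls
  rw [Finset.mem_image]
  constructor
  · rintro ⟨a, -, rfl⟩
    exact pol_degree n a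
  · intro h
    obtain ⟨a, ha⟩ := pol_surj n f h
    exact ⟨a, Finset.mem_univ _, ha⟩

lemma mem_Ms (n : ℕ) (f : k[X]) : f ∈ Ms k n ↔ f.Monic ∧ f.natDegree = n := by
  unfold Ms
  rw [Finset.mem_image]
  constructor
  · rintro ⟨g, hg, rfl⟩
    rw [mem_Ls] at hg
    exact ⟨monic_X_pow_add hg, natDegree_eq_of_degree_eq_some (by
      rw [degree_add_eq_left_of_degree_lt (by rwa [degree_X_pow]), degree_X_pow])⟩
  · rintro ⟨h1, h2⟩
    refine ⟨f - X ^ n, ?_, by ring⟩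
    rw [mem_Ls, degree_lt_iff_coeff_zero]
    intro m hm
    rw [coeff_sub, coeff_X_pow]
    split_ifs with h
    · subst h
      rw [← h2, h1.coeff_natDegree, sub_self]
    · rw [coeff_eq_zero_of_natDegree_lt (by omega), sub_zero]

lemma card_Ls (n : ℕ) : (Ls k n).card = Fintype.card k ^ n := by
  unfold Ls
  rw [Finset.card_image_of_injective _ (pol_inj n), Finset.card_univ, Fintype.card_fun, Fintype.card_fin]

lemma card_Ms (n : ℕ) : (Ms k n).card = Fintype.card k ^ n := by
  unfold Ms
  rw [Finset.card_image_of_injective _ (add_right_injective _), card_Ls]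

/-- number of residues coprime to `D` -/
def Phi (D : k[X]) : ℕ := ((Ls k D.natDegree).filter (fun r => IsCoprime D r)).card

lemma count_coprime (n : ℕ) (D g : k[X]) (hD : D.Monic) (hn : D.natDegree ≤ n) :
    ((Ls k n).filter (fun b => IsCoprime D (g + b))).card =
      Fintype.card k ^ (n - D.natDegree) * Phi D := by
  unfold Phi
  rw [← card_Ls, ← Finset.card_product]
  symm
  refine Finset.card_bij (fun x _ => x.1 * D + (x.2 - g %ₘ D)) ?_ ?_ ?_
  · rintro ⟨s, r⟩ h
    simp only [Finset.mem_product, Finset.mem_filter, mem_Ls] at h ⊢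
    obtain ⟨h1, h2, h3⟩ := h
    have hr : (r - g %ₘ D).degree < D.degree := by
      rw [degree_eq_natDegree hD.ne_zero]
      refine (degree_sub_le _ _).trans_lt (max_lt h2 ?_)
      rw [← degree_eq_natDegree hD.ne_zero]
      exact degree_modByMonic_lt _ hD
    refine ⟨?_, ?_⟩
    · refine (degree_add_le _ _).trans_lt (max_lt ?_ (hr.trans_le ?_))
      · by_cases hs : s = 0
        · subst hs
          simp
        · rw [← natDegree_lt_iff_degree_lt (mul_ne_zero hs hD.ne_zero), natDegree_mul hs hD.ne_zero]
          rw [← natDegree_lt_iff_degree_lt hs] at h1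
          omega
      · rw [degree_eq_natDegree hD.ne_zero]
        exact_mod_cast hn
    · have e : g + (s * D + (r - g %ₘ D)) = r + D * (s + g /ₘ D) := by
        have := modByMonic_add_div g D
        linear_combination -this
      rw [e]
      exact h3.add_mul_left_right _
  · rintro ⟨s, r⟩ h ⟨s', r'⟩ h' e
    simp only [Finset.mem_product, Finset.mem_filter, mem_Ls] at h h' e
    rw [← degree_eq_natDegree hD.ne_zero] at h h'
    have e2 : (s - s') * D = r' - r := by linear_combination e
    have : (r' - r).degree < D.degree := (degree_sub_le _ _).trans_lt (max_lt h'.2.1 h.2.1)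
    have h0 : r' - r = 0 := by
      by_contra hne
      exact absurd (degree_le_of_dvd (Dvd.intro_left _ e2) hne) (not_le.mpr this)
    rw [h0] at e2
    have h1 := (mul_eq_zero.mp e2).resolve_right hD.ne_zero
    rw [sub_eq_zero] at h0 h1
    rw [h0, h1]
  · intro b hb
    simp only [Finset.mem_filter, mem_Ls] at hb
    have e := modByMonic_add_div b D
    have e' := modByMonic_add_div g D
    refine ⟨(b /ₘ D, g %ₘ D + b %ₘ D), ?_, ?_⟩
    · simp only [Finset.mem_product, Finset.mem_filter, mem_Ls]
      refine ⟨?_, ?_, ?_⟩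
      · by_cases hs : b /ₘ D = 0
        · rw [hs, degree_zero]
          exact WithBot.bot_lt_coe _
        · rw [← natDegree_lt_iff_degree_lt hs, natDegree_divByMonic _ hD]
          have hb0 : b ≠ 0 := by
            rintro rfl
            exact hs (zero_divByMonic _)
          have h1 : ¬ b.degree < D.degree := fun h => hs ((divByMonic_eq_zero_iff hD).mpr h)
          rw [not_lt] at h1
          have h2 := natDegree_le_natDegree h1
          have h3 := (natDegree_lt_iff_degree_lt hb0).mpr hb.1
          omega
      · rw [← degree_eq_natDegree hD.ne_zero]
        exact (degree_add_le _ _).trans_lt (max_lt (degree_modByMonic_lt _ hD) (degree_modByMonic_lt _ hD))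
      · have e2 : g %ₘ D + b %ₘ D = (g + b) + D * (-(g /ₘ D) - b /ₘ D) := by
          linear_combination e + e'
        rw [e2]
        exact hb.2.add_mul_left_right _
    · simp only
      linear_combination e

/-- gcd extraction with monic gcd -/
lemma exists_monic_gcd (x y : k[X]) (hx : x ≠ 0) :
    ∃ g x' y' : k[X], g.Monic ∧ x = g * x' ∧ y = g * y' ∧ IsCoprime x' y' := by
  obtain ⟨x', y', h1, h2, h3⟩ := extract_gcd x y
  have hg : gcd x y ≠ 0 := by
    intro h
    rw [h, zero_mul] at h1
    exact hx h1
  have hl := leadingCoeff_ne_zero.mpr hg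
  refine ⟨gcd x y * C (gcd x y).leadingCoeff⁻¹, C (gcd x y).leadingCoeff * x',
    C (gcd x y).leadingCoeff * y', monic_mul_leadingCoeff_inv hg, ?_, ?_, ?_⟩
  · have : C (gcd x y).leadingCoeff⁻¹ * C (gcd x y).leadingCoeff = 1 := by
      rw [← C_mul, inv_mul_cancel₀ hl, C_1]
    conv_lhs => rw [h1]
    linear_combination (-gcd x y * x') * this
  · have : C (gcd x y).leadingCoeff⁻¹ * C (gcd x y).leadingCoeff = 1 := by
      rw [← C_mul, inv_mul_cancel₀ hl, C_1]
    conv_lhs => rw [h2]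
    linear_combination (-gcd x y * y') * this
  · have hu : IsUnit (C (gcd x y).leadingCoeff) := isUnit_C.mpr hl.isUnit
    exact (isCoprime_mul_unit_left hu _ _).mpr ((gcd_isUnit_iff _ _).mp h3)

lemma squarefree_unit_mul {u A : k[X]} (hu : IsUnit u) (hA : Squarefree A) : Squarefree (u * A) :=
  fun x hx => hA x (hu.dvd_mul_left.mp hx)

lemma sqfree_dvd (A D D' : k[X]) (hA : Squarefree A) (hD : D ≠ 0) (h : D ^ 2 ∣ A * D' ^ 2) : D ∣ D' := by
  obtain ⟨g, x, y, hg, h1, h2, h3⟩ := exists_monic_gcd D D' hD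
  have h4 : x ^ 2 ∣ A * y ^ 2 := by
    rw [h1, h2] at h
    have : g ^ 2 * x ^ 2 ∣ g ^ 2 * (A * y ^ 2) := by
      convert h using 1 <;> ring
    exact (mul_dvd_mul_iff_left (pow_ne_zero 2 hg.ne_zero)).mp this
  have h5 : x ^ 2 ∣ A := (h3.pow (m := 2) (n := 2)).dvd_of_dvd_mul_right h4
  have h6 : IsUnit x := hA x (by rwa [← sq])
  rw [h1, h2]
  obtain ⟨z, hz⟩ := h6.exists_right_inv
  exact ⟨z * y, by linear_combination (-g * y) * hz⟩

lemma sqpart_unique (A D A' D' : k[X]) (hA : Squarefree A) (hD : D.Monic) (hA' : Squarefree A')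
    (hD' : D'.Monic) (h : A * D ^ 2 = A' * D' ^ 2) : D = D' := by
  refine eq_of_monic_of_associated hD hD' (associated_of_dvd_dvd ?_ ?_)
  · exact sqfree_dvd A' D D' hA' hD.ne_zero ⟨A, by rw [← h]; ring⟩
  · exact sqfree_dvd A D' D hA hD'.ne_zero ⟨A', by rw [h]; ring⟩

lemma exists_sqpart (F : k[X]) (hF : F ≠ 0) : ∃ A D : k[X], Squarefree A ∧ D.Monic ∧ F = A * D ^ 2 := by
  induction hd : F.natDegree using Nat.strong_induction_on generalizing F with
  | _ d ih =>
    by_cases hsq : Squarefree F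
    · exact ⟨F, 1, hsq, monic_one, by ring⟩
    · unfold Squarefree at hsq
      push Not at hsq
      obtain ⟨x, ⟨G, hG⟩, hx⟩ := hsq
      have hx0 : x ≠ 0 := by
        rintro rfl
        simp at hG
        exact hF hG
      have hG0 : G ≠ 0 := by
        rintro rfl
        simp at hG
        exact hF hG
      have hxd : x.natDegree ≠ 0 := by
        intro h
        apply hx
        rw [natDegree_eq_zero] at h
        obtain ⟨c, rfl⟩ := h
        refine isUnit_C.mpr (IsUnit.mk0 _ ?_)
        rintro rfl
        simp at hx0
      have hlt : G.natDegree < d := by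
        rw [← hd, hG, natDegree_mul (mul_ne_zero hx0 hx0) hG0, natDegree_mul hx0 hx0]
        omega
      obtain ⟨A, D, hA, hD, e⟩ := ih _ hlt G hG0 rfl
      have hl := leadingCoeff_ne_zero.mpr hx0
      have hu : IsUnit (C x.leadingCoeff ^ 2) := (isUnit_C.mpr hl.isUnit).pow 2
      refine ⟨C x.leadingCoeff ^ 2 * A, (x * C x.leadingCoeff⁻¹) * D, ?_,
        (monic_mul_leadingCoeff_inv hx0).mul hD, ?_⟩
      · exact squarefree_unit_mul hu hA
      · have : C x.leadingCoeff⁻¹ * C x.leadingCoeff = 1 := by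
          rw [← C_mul, inv_mul_cancel₀ hl, C_1]
        rw [hG, e]
        linear_combination (-x ^ 2 * A * D ^ 2 * (1 + C x.leadingCoeff⁻¹ * C x.leadingCoeff)) * this

/-- the monic square part -/
def sqp (F : k[X]) : k[X] := if h : F ≠ 0 then (exists_sqpart F h).choose_spec.choose else 1
/-- the squarefree part -/
def sfp (F : k[X]) : k[X] := if h : F ≠ 0 then (exists_sqpart F h).choose else 0

lemma sfp_sqf (F : k[X]) (h : F ≠ 0) : Squarefree (sfp F) := by
  unfold sfp
  rw [dif_pos h]
  exact (exists_sqpart F h).choose_spec.choose_spec.1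

lemma sqp_monic (F : k[X]) : (sqp F).Monic := by
  unfold sqp
  split_ifs with h
  · exact (exists_sqpart F h).choose_spec.choose_spec.2.1
  · exact monic_one

lemma sqp_spec (F : k[X]) : F = sfp F * sqp F ^ 2 := by
  by_cases h : F ≠ 0
  · unfold sfp sqp
    rw [dif_pos h, dif_pos h]
    exact (exists_sqpart F h).choose_spec.choose_spec.2.2
  · unfold sfp
    rw [dif_neg h, zero_mul]
    exact not_not.mp h

lemma sqp_eq (F A D : k[X]) (hA : Squarefree A) (hD : D.Monic) (h : F = A * D ^ 2) : sqp F = D := by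
  have hF : F ≠ 0 := by
    rw [h]
    exact mul_ne_zero hA.ne_zero (pow_ne_zero _ hD.ne_zero)
  exact sqpart_unique (sfp F) _ A D (sfp_sqf F hF) (sqp_monic F) hA hD ((sqp_spec F).symm.trans h)

lemma sqp_smul (u : k) (hu : u ≠ 0) (F : k[X]) (hF : F ≠ 0) : sqp (C u * F) = sqp F := by
  refine sqp_eq _ (C u * sfp F) _ ?_ (sqp_monic F) ?_
  · exact squarefree_unit_mul (isUnit_C.mpr hu.isUnit) (sfp_sqf F hF)
  · conv_lhs => rw [sqp_spec F]
    ring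

lemma sqp_natDegree (F : k[X]) (hF : F ≠ 0) :
    (sfp F).natDegree + 2 * (sqp F).natDegree = F.natDegree := by
  conv_rhs => rw [sqp_spec F]
  rw [natDegree_mul (sfp_sqf F hF).ne_zero (pow_ne_zero _ (sqp_monic F).ne_zero), natDegree_pow]

end Cnt

section Cnt2
set_option linter.unusedSectionVars false
variable {k : Type} [Field k] [Fintype k]

/-- number of monic squarefree polynomials of degree `m` -/
def Sq (k : Type) [Field k] [Fintype k] (m : ℕ) : ℕ := ((Ms k m).filter Squarefree).card

/-- coprime pairs -/
def Cp (k : Type) [Field k] [Fintype k] (m : ℕ) : Finset (k[X] × k[X]) :=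
  (Ms k m ×ˢ Ls k m).filter (fun x => IsCoprime x.1 x.2)

lemma sfp_monic (F : k[X]) (hF : F.Monic) : (sfp F).Monic := by
  have := congrArg leadingCoeff (sqp_spec F)
  rw [leadingCoeff_mul, leadingCoeff_pow, (sqp_monic F).leadingCoeff, hF.leadingCoeff, one_pow, mul_one] at this
  exact this.symm

lemma sum_sqp (d : ℕ) (f : k[X] → ℝ) : ∑ F ∈ Ms k d, f (sqp F) =
    ∑ j ∈ Finset.range (d / 2 + 1), (Sq k (d - 2 * j) : ℝ) * ∑ D ∈ Ms k j, f D := by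
  have h1 : ∀ j, (Sq k (d - 2 * j) : ℝ) * ∑ D ∈ Ms k j, f D =
      ∑ x ∈ (Ms k (d - 2 * j)).filter Squarefree ×ˢ Ms k j, f x.2 := by
    intro j
    rw [Finset.sum_product]
    simp only [Finset.sum_const, nsmul_eq_mul]
    rfl
  simp only [h1]
  rw [Finset.sum_sigma']
  symm
  refine Finset.sum_bij' (fun x _ => x.2.1 * x.2.2 ^ 2) (fun F _ => ⟨(sqp F).natDegree, (sfp F, sqp F)⟩)
    ?_ ?_ ?_ ?_ ?_
  · rintro ⟨j, A, D⟩ h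
    simp only [Finset.mem_sigma, Finset.mem_range, Finset.mem_product, Finset.mem_filter, mem_Ms] at h ⊢
    obtain ⟨h0, ⟨⟨hA, hA2⟩, hA3⟩, hD, hD2⟩ := h
    refine ⟨hA.mul (hD.pow 2), ?_⟩
    rw [hA.natDegree_mul (hD.pow 2), hD.natDegree_pow]
    omega
  · intro F hF
    rw [mem_Ms] at hF
    simp only [Finset.mem_sigma, Finset.mem_range, Finset.mem_product, Finset.mem_filter, mem_Ms]
    have := sqp_natDegree F hF.1.ne_zero
    exact ⟨by omega, ⟨⟨sfp_monic F hF.1, by omega⟩, sfp_sqf F hF.1.ne_zero⟩, sqp_monic F, trivial⟩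
  · rintro ⟨j, A, D⟩ h
    simp only [Finset.mem_sigma, Finset.mem_range, Finset.mem_product, Finset.mem_filter, mem_Ms] at h ⊢
    obtain ⟨h0, ⟨⟨hA, hA2⟩, hA3⟩, hD, hD2⟩ := h
    have e : sqp (A * D ^ 2) = D := sqp_eq _ A D hA3 hD rfl
    have e2 : sfp (A * D ^ 2) = A := by
      have := sqp_spec (A * D ^ 2)
      rw [e] at this
      exact (mul_right_cancel₀ (pow_ne_zero 2 hD.ne_zero) this).symm
    rw [e, e2, hD2]
  · intro F hF
    exact (sqp_spec F).symm
  · rintro ⟨j, A, D⟩ h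
    simp only [Finset.mem_sigma, Finset.mem_range, Finset.mem_product, Finset.mem_filter, mem_Ms] at h ⊢
    obtain ⟨h0, ⟨⟨hA, hA2⟩, hA3⟩, hD, hD2⟩ := h
    rw [sqp_eq _ A D hA3 hD rfl]

lemma sum_Phi (j : ℕ) : ∑ D ∈ Ms k j, Phi D = (Cp k j).card := by
  unfold Cp
  rw [Finset.card_filter, Finset.sum_product]
  refine Finset.sum_congr rfl fun D hD => ?_
  rw [mem_Ms] at hD
  unfold Phi
  rw [Finset.card_filter, hD.2]

lemma Cp_rec (j : ℕ) : ∑ i ∈ Finset.range (j + 1), Fintype.card k ^ i * (Cp k (j - i)).card =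
    Fintype.card k ^ (2 * j) := by
  have h1 : ∀ i, Fintype.card k ^ i * (Cp k (j - i)).card = (Ms k i ×ˢ Cp k (j - i)).card := by
    intro i
    rw [Finset.card_product, card_Ms]
  have h2 : Fintype.card k ^ (2 * j) = (Ms k j ×ˢ Ls k j).card := by
    rw [Finset.card_product, card_Ms, card_Ls]
    ring
  simp only [h1]
  rw [h2, ← Finset.card_sigma]
  refine Finset.card_bij (fun x _ => (x.2.1 * x.2.2.1, x.2.1 * x.2.2.2)) ?_ ?_ ?_
  · rintro ⟨i, g, D, r⟩ h
    simp only [Cp, Finset.mem_sigma, Finset.mem_range, Finset.mem_product, Finset.mem_filter, mem_Ms, mem_Ls] at h ⊢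
    obtain ⟨h0, ⟨hg, hg2⟩, ⟨⟨hD, hD2⟩, hr⟩, hc⟩ := h
    refine ⟨⟨hg.mul hD, by rw [hg.natDegree_mul hD]; omega⟩, ?_⟩
    by_cases hr0 : r = 0
    · rw [hr0, mul_zero, degree_zero]
      exact WithBot.bot_lt_coe _
    · rw [← natDegree_lt_iff_degree_lt (mul_ne_zero hg.ne_zero hr0), natDegree_mul hg.ne_zero hr0]
      rw [← natDegree_lt_iff_degree_lt hr0] at hr
      omega
  · rintro ⟨i, g, D, r⟩ h ⟨i', g', D', r'⟩ h' e
    simp only [Cp, Finset.mem_sigma, Finset.mem_range, Finset.mem_product, Finset.mem_filter, mem_Ms, mem_Ls] at h h'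
    simp only [Prod.mk.injEq] at e
    obtain ⟨h0, ⟨hg, hg2⟩, ⟨⟨hD, hD2⟩, hr⟩, hc⟩ := h
    obtain ⟨h0', ⟨hg', hg2'⟩, ⟨⟨hD', hD2'⟩, hr'⟩, hc'⟩ := h'
    obtain ⟨e1, e2⟩ := e
    have hgg : g = g' := by
      refine eq_of_monic_of_associated hg hg' (associated_of_dvd_dvd ?_ ?_)
      · obtain ⟨x, y, hxy⟩ := hc'
        exact ⟨x * D + y * r, by linear_combination (-g') * hxy - x * e1 - y * e2⟩
      · obtain ⟨x, y, hxy⟩ := hc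
        exact ⟨x * D' + y * r', by linear_combination (-g) * hxy + x * e1 + y * e2⟩
    subst hgg
    have e3 := mul_left_cancel₀ hg.ne_zero e1
    have e4 := mul_left_cancel₀ hg.ne_zero e2
    rw [e3, e4, ← hg2, ← hg2']
  · rintro ⟨D, r⟩ h
    simp only [Finset.mem_product, mem_Ms, mem_Ls] at h
    obtain ⟨⟨hD, hD2⟩, hr⟩ := h
    obtain ⟨g, x, y, hg, e1, e2, hc⟩ := exists_monic_gcd D r hD.ne_zero
    have hx : x.Monic := hg.of_mul_monic_left (e1 ▸ hD)
    have hdx : D.natDegree = g.natDegree + x.natDegree := by rw [e1, hg.natDegree_mul hx]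
    refine ⟨⟨g.natDegree, g, x, y⟩, ?_, ?_⟩
    · simp only [Cp, Finset.mem_sigma, Finset.mem_range, Finset.mem_product, Finset.mem_filter, mem_Ms, mem_Ls]
      refine ⟨by omega, ⟨hg, trivial⟩, ⟨⟨hx, by omega⟩, ?_⟩, hc⟩
      by_cases hy : y = 0
      · rw [hy, degree_zero]
        exact WithBot.bot_lt_coe _
      · rw [← natDegree_lt_iff_degree_lt hy]
        rw [e2, ← natDegree_lt_iff_degree_lt (mul_ne_zero hg.ne_zero hy), natDegree_mul hg.ne_zero hy] at hr
        omega
    · simp only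
      rw [← e1, ← e2]

lemma Cp_zero : (Cp k 0).card = 1 := by
  have := Cp_rec (k := k) 0
  simpa using this

lemma Cp_succ (j : ℕ) : ((Cp k (j + 1)).card : ℝ) =
    (Fintype.card k : ℝ) ^ (2 * j + 2) - (Fintype.card k : ℝ) ^ (2 * j + 1) := by
  have h1 := Cp_rec (k := k) (j + 1)
  have h2 := Cp_rec (k := k) j
  rw [Finset.sum_range_succ'] at h1
  simp only [Nat.add_sub_add_right, pow_succ, pow_zero, one_mul, Nat.sub_zero] at h1
  have h3 : ∑ i ∈ Finset.range (j + 1), Fintype.card k ^ i * Fintype.card k * (Cp k (j - i)).card =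
      Fintype.card k * Fintype.card k ^ (2 * j) := by
    rw [← h2, Finset.mul_sum]
    exact Finset.sum_congr rfl fun i _ => by ring
  rw [h3] at h1
  have h4 : ((Fintype.card k * Fintype.card k ^ (2 * j) + (Cp k (j + 1)).card : ℕ) : ℝ) =
    (Fintype.card k ^ (2 * (j + 1)) : ℕ) := by rw [h1]
  push_cast at h4
  rw [show 2 * (j + 1) = 2 * j + 2 by ring] at h4
  rw [pow_succ _ (2 * j)]
  linear_combination h4

lemma Sq_sum (d : ℕ) : ∑ j ∈ Finset.range (d / 2 + 1), (Sq k (d - 2 * j) : ℝ) * (Fintype.card k : ℝ) ^ j =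
    (Fintype.card k : ℝ) ^ d := by
  have := sum_sqp (k := k) d (fun _ => 1)
  simp only [Finset.sum_const, nsmul_eq_mul, mul_one, card_Ms] at this
  push_cast at this
  exact this.symm

/-- the weight -/
def wt (D : k[X]) : ℝ := (Phi D : ℝ) / (Fintype.card k : ℝ) ^ D.natDegree

lemma q_ne : (Fintype.card k : ℝ) ≠ 0 := by exact_mod_cast Fintype.card_ne_zero

lemma sum_wt (j : ℕ) : ∑ D ∈ Ms k j, wt D = ((Cp k j).card : ℝ) / (Fintype.card k : ℝ) ^ j := by
  rw [← sum_Phi, Nat.cast_sum, Finset.sum_div]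
  refine Finset.sum_congr rfl fun D hD => ?_
  rw [mem_Ms] at hD
  unfold wt
  rw [hD.2]

lemma sum_wt_zero : ∑ D ∈ Ms k 0, wt D = 1 := by
  rw [sum_wt, Cp_zero]
  simp

lemma sum_wt_succ (j : ℕ) : ∑ D ∈ Ms k (j + 1), wt D =
    (Fintype.card k : ℝ) ^ (j + 1) - (Fintype.card k : ℝ) ^ j := by
  rw [sum_wt, Cp_succ, div_eq_iff (pow_ne_zero _ q_ne)]
  ring

/-- total weight of monic polynomials of degree `d` -/
def WW (k : Type) [Field k] [Fintype k] (d : ℕ) : ℝ := ∑ F ∈ Ms k d, wt (sqp F)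

lemma WW_zero : WW k 0 = 1 := by
  have h := Sq_sum (k := k) 0
  unfold WW
  rw [sum_sqp]
  simp at h
  simp [sum_wt_zero, h]

lemma WW_one : WW k 1 = Fintype.card k := by
  have h := Sq_sum (k := k) 1
  unfold WW
  rw [sum_sqp]
  simp at h
  simp [sum_wt_zero, h]

lemma WW_add_two (d : ℕ) : WW k (d + 2) = (Fintype.card k : ℝ) ^ (d + 2) - (Fintype.card k : ℝ) ^ d := by
  unfold WW
  rw [sum_sqp, ← Sq_sum (k := k) (d + 2), ← Sq_sum (k := k) d]
  rw [show (d + 2) / 2 + 1 = (d / 2 + 1) + 1 by omega, Finset.sum_range_succ', Finset.sum_range_succ' _ (d / 2 + 1)]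
  have : ∀ j, d + 2 - 2 * (j + 1) = d - 2 * j := fun j => by omega
  simp only [this, sum_wt_succ, sum_wt_zero, mul_sub, Finset.sum_sub_distrib]
  ring

lemma sum_WW (d : ℕ) : ∑ i ∈ Finset.range (d + 2), WW k i =
    (Fintype.card k : ℝ) ^ (d + 1) + (Fintype.card k : ℝ) ^ d := by
  induction d with
  | zero =>
    simp [Finset.sum_range_succ, WW_zero, WW_one, add_comm]
  | succ d ih =>
    rw [Finset.sum_range_succ, ih, WW_add_two]
    ring

lemma Sq_zero : (Sq k 0 : ℝ) = 1 := by
  have h := Sq_sum (k := k) 0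
  simpa using h

lemma sum_even (d : ℕ) (f : k[X] → ℝ) :
    ∑ F ∈ Ms k (2 * d), (if F.natDegree = 2 * (sqp F).natDegree then f (sqp F) else 0) = ∑ D ∈ Ms k d, f D := by
  have h1 : ∑ F ∈ Ms k (2 * d), (if F.natDegree = 2 * (sqp F).natDegree then f (sqp F) else 0) =
      ∑ F ∈ Ms k (2 * d), (fun D => if 2 * d = 2 * natDegree D then f D else 0) (sqp F) := by
    refine Finset.sum_congr rfl fun F hF => ?_
    rw [mem_Ms] at hF
    rw [hF.2]
  rw [h1, sum_sqp (2 * d) (fun D => if 2 * d = 2 * natDegree D then f D else 0), Finset.sum_eq_single d]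
  · rw [Nat.sub_self, Sq_zero, one_mul]
    refine Finset.sum_congr rfl fun D hD => ?_
    rw [mem_Ms] at hD
    rw [hD.2, if_pos rfl]
  · intro j _ hj
    rw [Finset.sum_eq_zero, mul_zero]
    intro D hD
    rw [mem_Ms] at hD
    rw [hD.2, if_neg (by omega)]
  · intro h
    rw [Finset.mem_range] at h
    omega

lemma sum_odd (d : ℕ) (f : k[X] → ℝ) :
    ∑ F ∈ Ms k (2 * d + 1), (if F.natDegree = 2 * (sqp F).natDegree then f (sqp F) else 0) = 0 := by
  refine Finset.sum_eq_zero fun F hF => ?_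
  rw [mem_Ms] at hF
  rw [hF.2, if_neg (by omega)]

lemma sum_even_range (m : ℕ) (f : k[X] → ℝ) :
    ∑ d ∈ Finset.range (2 * m), ∑ F ∈ Ms k d, (if F.natDegree = 2 * (sqp F).natDegree then f (sqp F) else 0) =
    ∑ j ∈ Finset.range m, ∑ D ∈ Ms k j, f D := by
  induction m with
  | zero => simp
  | succ m ih =>
    rw [show 2 * (m + 1) = 2 * m + 1 + 1 by ring, Finset.sum_range_succ, Finset.sum_range_succ, ih,
      sum_even, sum_odd, add_zero, Finset.sum_range_succ]

lemma sum_wt_range (m : ℕ) : ∑ j ∈ Finset.range (m + 1), ∑ D ∈ Ms k j, wt D = (Fintype.card k : ℝ) ^ m := by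
  induction m with
  | zero => simp [sum_wt_zero]
  | succ m ih =>
    rw [Finset.sum_range_succ, ih, sum_wt_succ]
    ring

lemma sum_pol (n : ℕ) (g : k[X] → ℝ) : ∑ a : Fin n → k, g (pol n a) = ∑ b ∈ Ls k n, g b := by
  unfold Ls
  rw [Finset.sum_image (fun a _ b _ h => pol_inj n h)]

lemma C_mul_mem_Ls (n : ℕ) (u : k) (b : k[X]) (hb : b ∈ Ls k n) : C u * b ∈ Ls k n := by
  rw [mem_Ls, degree_lt_iff_coeff_zero] at hb ⊢
  intro m hm
  rw [coeff_C_mul, hb m hm, mul_zero]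

lemma C_ne (u : k) (hu : u ≠ 0) : C u * C u⁻¹ = 1 := by
  rw [← C_mul, mul_inv_cancel₀ hu, C_1]

lemma sum_lead_unit (n : ℕ) (u : k) (hu : u ≠ 0) (h : k[X] → ℝ)
    (hh : ∀ u : k, u ≠ 0 → ∀ F : k[X], F ≠ 0 → h (C u * F) = h F) :
    ∑ a : Fin n → k, h (C u * X ^ n + pol n a) = ∑ F ∈ Ms k n, h F := by
  rw [sum_pol n (fun b => h (C u * X ^ n + b))]
  have h1 : ∑ F ∈ Ms k n, h F = ∑ b ∈ Ls k n, h (X ^ n + b) := by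
    unfold Ms
    rw [Finset.sum_image (fun a _ b _ h => add_right_injective _ h)]
  rw [h1]
  have hc := C_ne u hu
  refine Finset.sum_bij' (fun b _ => C u⁻¹ * b) (fun b _ => C u * b) ?_ ?_ ?_ ?_ ?_
  · exact fun b hb => C_mul_mem_Ls _ _ _ hb
  · exact fun b hb => C_mul_mem_Ls _ _ _ hb
  · intro b _
    linear_combination b * hc
  · intro b _
    linear_combination b * hc
  · intro b hb
    rw [← hh u hu (X ^ n + C u⁻¹ * b)]
    · congr 1
      linear_combination (-b) * hc
    · rw [mem_Ls] at hb
      refine (monic_X_pow_add ?_).ne_zero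
      exact mem_Ls n _ |>.mp (C_mul_mem_Ls n u⁻¹ b (mem_Ls n b |>.mpr hb))

lemma sum_lead_zero (n : ℕ) (h : k[X] → ℝ)
    (hh : ∀ u : k, u ≠ 0 → ∀ F : k[X], F ≠ 0 → h (C u * F) = h F) :
    ∑ a : Fin n → k, (if pol n a ≠ 0 then h (pol n a) else 0) =
      ((Fintype.card k : ℝ) - 1) * ∑ d ∈ Finset.range n, ∑ F ∈ Ms k d, h F := by
  rw [sum_pol n (fun b => if b ≠ 0 then h b else 0), ← Finset.sum_filter]
  have hcard : ((Fintype.card k : ℝ) - 1) = ((Finset.univ.erase (0 : k)).card : ℝ) := by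
    rw [Finset.card_erase_of_mem (Finset.mem_univ _), Finset.card_univ, Nat.cast_sub Fintype.card_pos]
    simp
  have h1 : ∀ d, ((Fintype.card k : ℝ) - 1) * ∑ F ∈ Ms k d, h F =
      ∑ x ∈ (Finset.univ.erase (0 : k)) ×ˢ Ms k d, h x.2 := by
    intro d
    rw [Finset.sum_product, hcard]
    simp only [Finset.sum_const, nsmul_eq_mul]
  rw [Finset.mul_sum]
  simp only [h1]
  rw [Finset.sum_sigma']
  symm
  refine Finset.sum_bij' (fun x _ => C x.2.1 * x.2.2)
    (fun b _ => ⟨b.natDegree, (b.leadingCoeff, C b.leadingCoeff⁻¹ * b)⟩) ?_ ?_ ?_ ?_ ?_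
  · rintro ⟨d, u, F⟩ hx
    simp only [Finset.mem_sigma, Finset.mem_range, Finset.mem_product, Finset.mem_filter, mem_Ms, mem_Ls,
      Finset.mem_erase, Finset.mem_univ, and_true] at hx ⊢
    obtain ⟨h0, hu, hF, hF2⟩ := hx
    have hne : C u * F ≠ 0 := mul_ne_zero (C_ne_zero.mpr hu) hF.ne_zero
    refine ⟨?_, hne⟩
    rw [← natDegree_lt_iff_degree_lt hne, natDegree_C_mul hu]
    omega
  · intro b hb
    simp only [Finset.mem_sigma, Finset.mem_range, Finset.mem_product, Finset.mem_filter, mem_Ms, mem_Ls,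
      Finset.mem_erase, Finset.mem_univ, and_true] at hb ⊢
    obtain ⟨hb1, hb0⟩ := hb
    have hl := leadingCoeff_ne_zero.mpr hb0
    refine ⟨(natDegree_lt_iff_degree_lt hb0).mpr hb1, hl, ?_, natDegree_C_mul (inv_ne_zero hl)⟩
    rw [mul_comm]
    exact monic_mul_leadingCoeff_inv hb0
  · rintro ⟨d, u, F⟩ hx
    simp only [Finset.mem_sigma, Finset.mem_range, Finset.mem_product, Finset.mem_filter, mem_Ms, mem_Ls,
      Finset.mem_erase, Finset.mem_univ, and_true] at hx ⊢
    obtain ⟨h0, hu, hF, hF2⟩ := hx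
    have e1 : (C u * F).leadingCoeff = u := by
      rw [leadingCoeff_mul, leadingCoeff_C, hF.leadingCoeff, mul_one]
    have e2 : (C u * F).natDegree = d := by rw [natDegree_C_mul hu, hF2]
    have e3 : C u⁻¹ * (C u * F) = F := by linear_combination F * C_ne u hu
    rw [e1, e2, e3]
  · intro b hb
    simp only [Finset.mem_filter] at hb
    linear_combination b * C_ne _ (leadingCoeff_ne_zero.mpr hb.2)
  · rintro ⟨d, u, F⟩ hx
    simp only [Finset.mem_sigma, Finset.mem_range, Finset.mem_product, Finset.mem_filter, mem_Ms, mem_Ls,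
      Finset.mem_erase, Finset.mem_univ, and_true] at hx ⊢
    obtain ⟨h0, hu, hF, hF2⟩ := hx
    exact (hh u hu F hF.ne_zero).symm

end Cnt2

section Fin1
variable {p : ℕ} [Fact p.Prime]

/-- the reduced polynomial attached to a residue vector -/
def FF (n : ℕ) (f0 : ℤ_[p]) (a : Fin n → ZMod p) : (ZMod p)[X] := C (PadicInt.toZMod f0) * X ^ n + pol n a

lemma polyZ_cons_red (n : ℕ) (f0 : ℤ_[p]) (v : Fin n → ℤ_[p]) :
    red p (polyZ n (consF0 p n f0 v)) = FF n f0 (fun i => PadicInt.toZMod (v i)) := by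
  rw [red_polyZ]
  ext m
  rw [polyZ_coeff, FF, coeff_add, coeff_C_mul, coeff_X_pow, pol_coeff]
  by_cases h1 : m = n
  · subst h1
    rw [if_pos le_rfl, Nat.sub_self, consF0_zero, if_pos rfl, dif_neg (lt_irrefl _), mul_one, add_zero]
  · by_cases h2 : m < n
    · rw [if_pos h2.le, if_neg h1, dif_pos h2, mul_zero, zero_add]
      have e : n - m = (n - 1 - m) + 1 := by omega
      rw [e, consF0_succ n f0 v (n - 1 - m) (by omega)]
    · rw [if_neg (by omega), if_neg h1, dif_neg h2, mul_zero, zero_add]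

lemma FF_natDegree (n : ℕ) (f0 : ℤ_[p]) (a : Fin n → ZMod p) : (FF n f0 a).natDegree ≤ n := by
  rw [natDegree_le_iff_coeff_eq_zero]
  intro m hm
  rw [FF, coeff_add, coeff_C_mul, coeff_X_pow, pol_coeff, if_neg (by omega), dif_neg (by omega), mul_zero, zero_add]

lemma FF_coeff_lt (n : ℕ) (f0 : ℤ_[p]) (a : Fin n → ZMod p) (i : Fin n) :
    (FF n f0 a).coeff (n - 1 - i) = a i := by
  have hi := i.2
  rw [FF, coeff_add, coeff_C_mul, coeff_X_pow, pol_coeff, if_neg (by omega), dif_pos (by omega), mul_zero, zero_add]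
  congr 1
  ext
  simp only
  omega

lemma FF_coeff_n (n : ℕ) (f0 : ℤ_[p]) (a : Fin n → ZMod p) :
    (FF n f0 a).coeff n = PadicInt.toZMod f0 := by
  rw [FF, coeff_add, coeff_C_mul, coeff_X_pow, pol_coeff, if_pos rfl, dif_neg (by omega), mul_one, add_zero]

/-- lift of the squarefree part -/
def LA (F : (ZMod p)[X]) : ℤ_[p][X] := (exists_deg_lift (sfp F)).choose
/-- lift of the square part -/
def LD (F : (ZMod p)[X]) : ℤ_[p][X] := (exists_monic_lift (sqp F) (sqp_monic F)).choose

lemma LA_red (F : (ZMod p)[X]) : red p (LA F) = sfp F := (exists_deg_lift (sfp F)).choose_spec.1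
lemma LA_deg (F : (ZMod p)[X]) : (LA F).natDegree = (sfp F).natDegree := (exists_deg_lift (sfp F)).choose_spec.2
lemma LD_red (F : (ZMod p)[X]) : red p (LD F) = sqp F := (exists_monic_lift (sqp F) (sqp_monic F)).choose_spec.1
lemma LD_deg (F : (ZMod p)[X]) : (LD F).natDegree = (sqp F).natDegree :=
  (exists_monic_lift (sqp F) (sqp_monic F)).choose_spec.2.1
lemma LD_monic (F : (ZMod p)[X]) : (LD F).Monic := (exists_monic_lift (sqp F) (sqp_monic F)).choose_spec.2.2

lemma LAD_red (F : (ZMod p)[X]) : red p (LA F * LD F ^ 2) = F := by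
  rw [map_mul, map_pow, LA_red, LD_red, ← sqp_spec]

/-- choice of lifts -/
def LL (n : ℕ) (f0 : ℤ_[p]) (a : Fin n → ZMod p) (i : Fin n) : ℤ_[p] :=
  (LA (FF n f0 a) * LD (FF n f0 a) ^ 2).coeff (n - 1 - i)

lemma LL_red (n : ℕ) (f0 : ℤ_[p]) (a : Fin n → ZMod p) (i : Fin n) :
    PadicInt.toZMod (LL n f0 a i) = a i := by
  rw [LL, ← red_coeff, LAD_red, FF_coeff_lt]

lemma fib_red (n : ℕ) (f0 : ℤ_[p]) (a b : Fin n → ZMod p) (v : Fin n → ℤ_[p])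
    (hv : v ∈ Fib n (LL n f0) (a, b)) : red p (polyZ n (consF0 p n f0 v)) = FF n f0 a := by
  rw [polyZ_cons_red]
  congr 1
  funext i
  obtain ⟨w, h1, h2⟩ := hv
  rw [h2, map_add, LL_red, (toZMod_eq_zero_iff _).mpr (dvd_mul_right _ _), add_zero]

lemma fib_dec (n : ℕ) (f0 : ℤ_[p]) (a : Fin n → ZMod p) (ha : FF n f0 a ≠ 0) :
    ∃ g : (ZMod p)[X], ∀ b v, v ∈ Fib n (LL n f0) (a, b) → ∃ G : ℤ_[p][X],
      polyZ n (consF0 p n f0 v) = LA (FF n f0 a) * LD (FF n f0 a) ^ 2 + C (p : ℤ_[p]) * G ∧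
      red p G = g + pol n b := by
  have hd : (p : ℤ_[p]) ∣ f0 - (LA (FF n f0 a) * LD (FF n f0 a) ^ 2).coeff n := by
    rw [← toZMod_eq_zero_iff, map_sub, ← red_coeff, LAD_red, FF_coeff_n, sub_self]
  obtain ⟨g0, hg0⟩ := hd
  refine ⟨C (PadicInt.toZMod g0) * X ^ n, ?_⟩
  rintro b v ⟨w, h1, h2⟩
  refine ⟨polyZ n (consF0 p n g0 w), ?_, ?_⟩
  · ext m
    rw [coeff_add, coeff_C_mul, polyZ_coeff, polyZ_coeff]
    by_cases h3 : m = n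
    · subst h3
      rw [if_pos le_rfl, if_pos le_rfl, Nat.sub_self, consF0_zero, consF0_zero, ← hg0]
      ring
    · by_cases h4 : m < n
      · rw [if_pos h4.le, if_pos h4.le]
        have e : n - m = (n - 1 - m) + 1 := by omega
        rw [e, consF0_succ n f0 v (n - 1 - m) (by omega), consF0_succ n g0 w (n - 1 - m) (by omega), h2]
        congr 1
        rw [LL]
        congr 1
        simp only
        omega
      · rw [if_neg (by omega), if_neg (by omega), mul_zero, add_zero, coeff_eq_zero_of_natDegree_lt]
        have h5 := FF_natDegree n f0 a
        rw [← sqp_natDegree _ ha] at h5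
        have h6 : (LA (FF n f0 a) * LD (FF n f0 a) ^ 2).natDegree ≤
            (LA (FF n f0 a)).natDegree + 2 * (LD (FF n f0 a)).natDegree :=
          natDegree_mul_le.trans (by gcongr; exact natDegree_pow_le)
        rw [LA_deg, LD_deg] at h6
        omega
  · rw [polyZ_cons_red, FF]
    congr 2
    funext i
    exact h1 i

lemma fib_max (n : ℕ) (f0 : ℤ_[p]) (h2 : ¬ (p : ℤ_[p]) ^ 2 ∣ f0) (a : Fin n → ZMod p) (ha : FF n f0 a ≠ 0) :
    ∃ g : (ZMod p)[X], ∀ b v, v ∈ Fib n (LL n f0) (a, b) → consF0 p n f0 v n ≠ 0 →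
      (IsMaxOrder ℤ_[p] ℚ_[p] n (consF0 p n f0 v) ↔ IsCoprime (sqp (FF n f0 a)) (g + pol n b)) := by
  obtain ⟨g, hg⟩ := fib_dec n f0 a ha
  refine ⟨g, fun b v hv hcn => ?_⟩
  obtain ⟨G, e1, e2⟩ := hg b v hv
  have hP0 : red p (polyZ n (consF0 p n f0 v)) ≠ 0 := by rwa [fib_red n f0 a b v hv]
  rw [← e2, ← LD_red]
  constructor
  · intro h
    by_contra hco
    refine not_isMax_of_not_coprime n _ hcn _ _ G e1 hP0 (LD_monic _) ?_ hco h
    rw [LA_deg, LD_deg, sqp_natDegree _ ha]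
    exact FF_natDegree n f0 a
  · intro h
    refine isMax_of_coprime n _ hcn ?_ _ _ G e1 hP0 ?_ h
    · rwa [consF0_zero]
    · rw [LA_red]
      exact sfp_sqf _ ha

/-- even-degree condition -/
def Ev (F : (ZMod p)[X]) : Prop := F.natDegree = 2 * (sqp F).natDegree

lemma even_iff (F : (ZMod p)[X]) (hF : F ≠ 0) :
    (∃ (κ : (ZMod p)ˣ) (h : (ZMod p)[X]), F = C (κ : ZMod p) * h ^ 2) ↔ Ev F := by
  unfold Ev
  constructor
  · rintro ⟨κ, h, e⟩
    have hh : h ≠ 0 := by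
      rintro rfl
      apply hF
      rw [e]
      simp
    have hl := leadingCoeff_ne_zero.mpr hh
    have hm := monic_mul_leadingCoeff_inv hh
    have hs : sqp F = h * C h.leadingCoeff⁻¹ := by
      refine sqp_eq F (C ((κ : ZMod p) * h.leadingCoeff ^ 2)) _ ?_ hm ?_
      · exact (isUnit_C.mpr (mul_ne_zero κ.ne_zero (pow_ne_zero 2 hl)).isUnit).squarefree
      · have := C_ne _ hl
        rw [e, C_mul, C_pow]
        linear_combination (-C (κ : ZMod p) * h ^ 2 * (1 + C h.leadingCoeff * C h.leadingCoeff⁻¹)) * this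
    rw [hs, natDegree_mul_C (inv_ne_zero hl), e, natDegree_C_mul κ.ne_zero, natDegree_pow]
  · intro h
    have h1 := sqp_natDegree F hF
    have h2 : (sfp F).natDegree = 0 := by omega
    rw [natDegree_eq_zero] at h2
    obtain ⟨c, hc⟩ := h2
    have hc0 : c ≠ 0 := by
      rintro rfl
      have := (sfp_sqf F hF).ne_zero
      rw [← hc] at this
      simp at this
    refine ⟨Units.mk0 c hc0, sqp F, ?_⟩
    conv_lhs => rw [sqp_spec F]
    rw [← hc, Units.val_mk0]

lemma Ev_smul (u : ZMod p) (hu : u ≠ 0) (F : (ZMod p)[X]) (hF : F ≠ 0) : Ev (C u * F) ↔ Ev F := by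
  unfold Ev
  rw [sqp_smul u hu F hF, natDegree_C_mul hu]

/-- the finite-field sum -/
def II (n : ℕ) (f0 : ℤ_[p]) (h : (ZMod p)[X] → ℝ) : ℝ :=
  ∑ a : Fin n → ZMod p, if FF n f0 a ≠ 0 then h (FF n f0 a) else 0

lemma ae_good (n : ℕ) (hn : 0 < n) (f0 : ℤ_[p]) (hf0 : f0 ≠ 0) :
    ∀ᵐ v ∂(haarP p n), SepDegP p n (consF0 p n f0 v) ∧ consF0 p n f0 v n ≠ 0 := by
  have h1 : ∀ᵐ v ∂(haarP p n), SepDegP p n (consF0 p n f0 v) := null_sep n hn f0 hf0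
  have h2 : ∀ᵐ v ∂(haarP p n), consF0 p n f0 v n ≠ 0 := by
    rw [ae_iff]
    simpa using null_last (p := p) n hn f0
  filter_upwards [h1, h2] with v a b using ⟨a, b⟩

lemma meas_prim (n : ℕ) (hn : 0 < n) (f0 : ℤ_[p]) (hf0 : f0 ≠ 0) (P : (ZMod p)[X] → Prop)
    (S : Set (Fin n → ℤ_[p]))
    (hS : ∀ v, v ∈ S ↔ SepDegP p n (consF0 p n f0 v) ∧ red p (polyZ n (consF0 p n f0 v)) ≠ 0 ∧
      P (red p (polyZ n (consF0 p n f0 v)))) :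
    (haarP p n S).toReal = ((p : ℝ) ^ n / (p : ℝ) ^ (2 * n)) * II n f0 (fun F => if P F then 1 else 0) := by
  rw [measure_count (L := LL n f0) (LL_red n f0) S (fun a _ => FF n f0 a ≠ 0 ∧ P (FF n f0 a))]
  · rw [div_mul_eq_mul_div]
    congr 1
    rw [II, Finset.mul_sum]
    refine Finset.sum_congr rfl fun a _ => ?_
    by_cases h1 : FF n f0 a ≠ 0 ∧ P (FF n f0 a)
    · rw [if_pos h1.1, if_pos h1.2, mul_one]
      have : Nat.card {b : Fin n → ZMod p // FF n f0 a ≠ 0 ∧ P (FF n f0 a)} = p ^ n := by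
        rw [Nat.card_congr (Equiv.subtypeUnivEquiv fun _ => h1), Nat.card_eq_fintype_card, Fintype.card_fun,
          ZMod.card, Fintype.card_fin]
      rw [this]
      push_cast
      rfl
    · have : Nat.card {b : Fin n → ZMod p // FF n f0 a ≠ 0 ∧ P (FF n f0 a)} = 0 := by
        have : IsEmpty {b : Fin n → ZMod p // FF n f0 a ≠ 0 ∧ P (FF n f0 a)} := ⟨fun x => h1 x.2⟩
        exact Nat.card_of_isEmpty
      rw [this]
      split_ifs with h2 h3
      · exact absurd ⟨h2, h3⟩ h1
      · simp
      · simp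
  · filter_upwards [ae_good n hn f0 hf0] with v hv a b hab
    rw [hS, fib_red n f0 a b v hab]
    exact ⟨fun h => h.2, fun h => ⟨hv.1, h⟩⟩

lemma meas_max (n : ℕ) (hn : 0 < n) (f0 : ℤ_[p]) (hf0 : f0 ≠ 0) (h2 : ¬ (p : ℤ_[p]) ^ 2 ∣ f0)
    (P : (ZMod p)[X] → Prop) (S : Set (Fin n → ℤ_[p]))
    (hS : ∀ v, v ∈ S ↔ SepDegP p n (consF0 p n f0 v) ∧ red p (polyZ n (consF0 p n f0 v)) ≠ 0 ∧
      IsMaxOrder ℤ_[p] ℚ_[p] n (consF0 p n f0 v) ∧ P (red p (polyZ n (consF0 p n f0 v)))) :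
    (haarP p n S).toReal = ((p : ℝ) ^ n / (p : ℝ) ^ (2 * n)) * II n f0 (fun F => if P F then wt (sqp F) else 0) := by
  have hg : ∀ a : Fin n → ZMod p, ∃ g : (ZMod p)[X], FF n f0 a ≠ 0 → ∀ b v, v ∈ Fib n (LL n f0) (a, b) →
      consF0 p n f0 v n ≠ 0 →
      (IsMaxOrder ℤ_[p] ℚ_[p] n (consF0 p n f0 v) ↔ IsCoprime (sqp (FF n f0 a)) (g + pol n b)) := by
    intro a
    by_cases ha : FF n f0 a ≠ 0
    · obtain ⟨g, hg⟩ := fib_max n f0 h2 a ha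
      exact ⟨g, fun _ => hg⟩
    · exact ⟨0, fun h => absurd h ha⟩
  choose g hg using hg
  rw [measure_count (L := LL n f0) (LL_red n f0) S
    (fun a b => FF n f0 a ≠ 0 ∧ IsCoprime (sqp (FF n f0 a)) (g a + pol n b) ∧ P (FF n f0 a))]
  · rw [div_mul_eq_mul_div]
    congr 1
    rw [II, Finset.mul_sum]
    refine Finset.sum_congr rfl fun a _ => ?_
    by_cases h1 : FF n f0 a ≠ 0 ∧ P (FF n f0 a)
    · rw [if_pos h1.1, if_pos h1.2]
      have hle : (sqp (FF n f0 a)).natDegree ≤ n := by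
        have h3 := sqp_natDegree _ h1.1
        have h4 := FF_natDegree n f0 a
        omega
      have hc := count_coprime n (sqp (FF n f0 a)) (g a) (sqp_monic _) hle
      have : Nat.card {b : Fin n → ZMod p // FF n f0 a ≠ 0 ∧
          IsCoprime (sqp (FF n f0 a)) (g a + pol n b) ∧ P (FF n f0 a)} =
          ((Ls (ZMod p) n).filter (fun b => IsCoprime (sqp (FF n f0 a)) (g a + b))).card := by
        rw [Nat.card_eq_fintype_card, Fintype.card_subtype]
        refine Finset.card_bij (fun b _ => pol n b) ?_ ?_ ?_
        · intro b hb
          simp only [Finset.mem_filter, Finset.mem_univ, true_and] at hb ⊢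
          exact ⟨(mem_Ls _ _).mpr (pol_degree n b), hb.2.1⟩
        · exact fun b _ b' _ h => pol_inj n h
        · intro f hf
          simp only [Finset.mem_filter, mem_Ls] at hf
          obtain ⟨b, hb⟩ := pol_surj n f hf.1
          refine ⟨b, ?_, hb⟩
          simp only [Finset.mem_filter, Finset.mem_univ, true_and]
          exact ⟨h1.1, hb ▸ hf.2, h1.2⟩
      rw [this, hc, wt, ZMod.card]
      have hp : (p : ℝ) ≠ 0 := by exact_mod_cast (Fact.out : p.Prime).ne_zero
      push_cast
      rw [mul_div_assoc', eq_div_iff (pow_ne_zero _ hp)]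
      have e : (p : ℝ) ^ n = (p : ℝ) ^ (n - (sqp (FF n f0 a)).natDegree) * (p : ℝ) ^ (sqp (FF n f0 a)).natDegree := by
        rw [← pow_add, Nat.sub_add_cancel hle]
      rw [e]
      ring
    · have : Nat.card {b : Fin n → ZMod p // FF n f0 a ≠ 0 ∧
          IsCoprime (sqp (FF n f0 a)) (g a + pol n b) ∧ P (FF n f0 a)} = 0 := by
        have : IsEmpty {b : Fin n → ZMod p // FF n f0 a ≠ 0 ∧
          IsCoprime (sqp (FF n f0 a)) (g a + pol n b) ∧ P (FF n f0 a)} := ⟨fun x => h1 ⟨x.2.1, x.2.2.2⟩⟩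
        exact Nat.card_of_isEmpty
      rw [this]
      split_ifs with h2 h3
      · exact absurd ⟨h2, h3⟩ h1
      · simp
      · simp
  · filter_upwards [ae_good n hn f0 hf0] with v hv a b hab
    rw [hS, fib_red n f0 a b v hab]
    constructor
    · rintro ⟨h3, h4, h5, h6⟩
      exact ⟨h4, (hg a h4 b v hab hv.2).mp h5, h6⟩
    · rintro ⟨h4, h5, h6⟩
      exact ⟨hv.1, h4, (hg a h4 b v hab hv.2).mpr h5, h6⟩

end Fin1

section Fin2
variable {p : ℕ} [Fact p.Prime]

lemma II_unit (n : ℕ) (f0 : ℤ_[p]) (hu : ¬ (p : ℤ_[p]) ∣ f0) (h : (ZMod p)[X] → ℝ)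
    (hh : ∀ u : ZMod p, u ≠ 0 → ∀ F : (ZMod p)[X], F ≠ 0 → h (C u * F) = h F) :
    II n f0 h = ∑ F ∈ Ms (ZMod p) n, h F := by
  have hu' : PadicInt.toZMod f0 ≠ 0 := fun h => hu ((toZMod_eq_zero_iff _).mp h)
  rw [← sum_lead_unit n _ hu' h hh, II]
  refine Finset.sum_congr rfl fun a _ => ?_
  have : FF n f0 a ≠ 0 := by
    intro h0
    have := FF_coeff_n n f0 a
    rw [h0, coeff_zero] at this
    exact hu' this.symm
  rw [if_pos this]
  rfl

lemma II_zero (n : ℕ) (f0 : ℤ_[p]) (hu : (p : ℤ_[p]) ∣ f0) (h : (ZMod p)[X] → ℝ)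
    (hh : ∀ u : ZMod p, u ≠ 0 → ∀ F : (ZMod p)[X], F ≠ 0 → h (C u * F) = h F) :
    II n f0 h = ((p : ℝ) - 1) * ∑ d ∈ Finset.range n, ∑ F ∈ Ms (ZMod p) d, h F := by
  have hu' : PadicInt.toZMod f0 = 0 := (toZMod_eq_zero_iff _).mpr hu
  have := sum_lead_zero n h hh
  rw [ZMod.card] at this
  rw [← this, II]
  refine Finset.sum_congr rfl fun a _ => ?_
  have e : FF n f0 a = pol n a := by
    rw [FF, hu', C_0, zero_mul, zero_add]
  rw [e]
  congr

lemma inv_even (w : (ZMod p)[X] → ℝ) : ∀ u : ZMod p, u ≠ 0 → ∀ F : (ZMod p)[X], F ≠ 0 →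
    (fun F => if Ev F then w (sqp F) else 0) (C u * F) = (fun F => if Ev F then w (sqp F) else 0) F := by
  intro u hu F hF
  simp only [sqp_smul u hu F hF, Ev_smul u hu F hF]

lemma inv_all (w : (ZMod p)[X] → ℝ) : ∀ u : ZMod p, u ≠ 0 → ∀ F : (ZMod p)[X], F ≠ 0 →
    (fun F => w (sqp F)) (C u * F) = (fun F => w (sqp F)) F := by
  intro u hu F hF
  simp only [sqp_smul u hu F hF]

lemma p_pos : (0 : ℝ) < p := by exact_mod_cast (Fact.out : p.Prime).pos
lemma p_gt : (1 : ℝ) < p := by exact_mod_cast (Fact.out : p.Prime).one_lt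

lemma II_even_unit (m : ℕ) (f0 : ℤ_[p]) (hu : ¬ (p : ℤ_[p]) ∣ f0) (w : (ZMod p)[X] → ℝ) :
    II (2 * m) f0 (fun F => if Ev F then w (sqp F) else 0) = ∑ D ∈ Ms (ZMod p) m, w D := by
  rw [II_unit _ _ hu _ (inv_even w), ← sum_even m w]
  refine Finset.sum_congr rfl fun F _ => ?_
  unfold Ev
  congr

lemma II_even_zero (m : ℕ) (f0 : ℤ_[p]) (hu : (p : ℤ_[p]) ∣ f0) (w : (ZMod p)[X] → ℝ) :
    II (2 * m) f0 (fun F => if Ev F then w (sqp F) else 0) =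
      ((p : ℝ) - 1) * ∑ j ∈ Finset.range m, ∑ D ∈ Ms (ZMod p) j, w D := by
  rw [II_zero _ _ hu _ (inv_even w), ← sum_even_range m w]
  congr 1
  refine Finset.sum_congr rfl fun d _ => Finset.sum_congr rfl fun F _ => ?_
  unfold Ev
  congr

lemma II_all_unit (n : ℕ) (f0 : ℤ_[p]) (hu : ¬ (p : ℤ_[p]) ∣ f0) (w : (ZMod p)[X] → ℝ) :
    II n f0 (fun F => w (sqp F)) = ∑ F ∈ Ms (ZMod p) n, w (sqp F) := by
  rw [II_unit _ _ hu _ (inv_all w)]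

lemma II_all_zero (n : ℕ) (f0 : ℤ_[p]) (hu : (p : ℤ_[p]) ∣ f0) (w : (ZMod p)[X] → ℝ) :
    II n f0 (fun F => w (sqp F)) =
      ((p : ℝ) - 1) * ∑ d ∈ Finset.range n, ∑ F ∈ Ms (ZMod p) d, w (sqp F) := by
  rw [II_zero _ _ hu _ (inv_all w)]

lemma sum_one (d : ℕ) : ∑ _F ∈ Ms (ZMod p) d, (1 : ℝ) = (p : ℝ) ^ d := by
  rw [Finset.sum_const, card_Ms, ZMod.card, nsmul_eq_mul, mul_one]
  push_cast
  rfl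

lemma dens_prim (n : ℕ) (hn : 0 < n) (heven : Even n) (f0 : ℤ_[p]) (hf0 : f0 ≠ 0) :
    densIn p n
        {v | SepDegP p n (consF0 p n f0 v) ∧ PrimP p n (consF0 p n f0 v) ∧
          EvenRamP p n (consF0 p n f0 v)}
        {v | SepDegP p n (consF0 p n f0 v) ∧ PrimP p n (consF0 p n f0 v)} =
    II n f0 (fun F => if Ev F then 1 else 0) / II n f0 (fun _ => 1) := by
  have hp := p_pos (p := p)
  have hc : ((p : ℝ) ^ n / (p : ℝ) ^ (2 * n)) ≠ 0 := by positivity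
  have h1 := meas_prim n hn f0 hf0 Ev {v | SepDegP p n (consF0 p n f0 v) ∧ PrimP p n (consF0 p n f0 v) ∧
          EvenRamP p n (consF0 p n f0 v)} (by
    intro v
    simp only [Set.mem_ofPred_eq, primP_iff, evenRam_iff n heven]
    exact and_congr_right fun _ => and_congr_right fun h => even_iff _ h)
  have h2 := meas_prim n hn f0 hf0 (fun _ => True)
    {v | SepDegP p n (consF0 p n f0 v) ∧ PrimP p n (consF0 p n f0 v)} (by
    intro v
    simp only [Set.mem_ofPred_eq, primP_iff, and_true])
  simp only [if_true] at h2
  rw [densIn, h1, h2, mul_div_mul_left _ _ hc]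

lemma dens_max (n : ℕ) (hn : 0 < n) (heven : Even n) (f0 : ℤ_[p]) (hf0 : f0 ≠ 0) (h2 : ¬ (p : ℤ_[p]) ^ 2 ∣ f0) :
    densIn p n
        {v | SepDegP p n (consF0 p n f0 v) ∧ PrimP p n (consF0 p n f0 v) ∧
          IsMaxOrder ℤ_[p] ℚ_[p] n (consF0 p n f0 v) ∧ EvenRamP p n (consF0 p n f0 v)}
        {v | SepDegP p n (consF0 p n f0 v) ∧ PrimP p n (consF0 p n f0 v) ∧
          IsMaxOrder ℤ_[p] ℚ_[p] n (consF0 p n f0 v)} =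
    II n f0 (fun F => if Ev F then wt (sqp F) else 0) / II n f0 (fun F => wt (sqp F)) := by
  have hp := p_pos (p := p)
  have hc : ((p : ℝ) ^ n / (p : ℝ) ^ (2 * n)) ≠ 0 := by positivity
  have h1 := meas_max n hn f0 hf0 h2 Ev {v | SepDegP p n (consF0 p n f0 v) ∧ PrimP p n (consF0 p n f0 v) ∧
          IsMaxOrder ℤ_[p] ℚ_[p] n (consF0 p n f0 v) ∧ EvenRamP p n (consF0 p n f0 v)} (by
    intro v
    simp only [Set.mem_ofPred_eq, primP_iff, evenRam_iff n heven]
    exact and_congr_right fun _ => and_congr_right fun h => and_congr_right fun _ => even_iff _ h)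
  have h3 := meas_max n hn f0 hf0 h2 (fun _ => True)
    {v | SepDegP p n (consF0 p n f0 v) ∧ PrimP p n (consF0 p n f0 v) ∧
          IsMaxOrder ℤ_[p] ℚ_[p] n (consF0 p n f0 v)} (by
    intro v
    simp only [Set.mem_ofPred_eq, primP_iff, and_true])
  simp only [if_true] at h3
  rw [densIn, h1, h3, mul_div_mul_left _ _ hc]

end Fin2

/-- Theorem 3.6: densities of evenly ramified forms among separable
primitive forms, and among forms cutting out the maximal order. -/
theorem evenly_ramified_densities
    (p : ℕ) [Fact p.Prime]
    (n : ℕ) (hn : 4 ≤ n) (heven : Even n)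
    (f0 : ℤ_[p]) (hf0 : f0 ≠ 0) :
    (¬ (p : ℤ_[p]) ∣ f0 →
      densIn p n
        {v | SepDegP p n (consF0 p n f0 v) ∧ PrimP p n (consF0 p n f0 v) ∧
          EvenRamP p n (consF0 p n f0 v)}
        {v | SepDegP p n (consF0 p n f0 v) ∧ PrimP p n (consF0 p n f0 v)} =
        ((p : ℝ) ^ (n / 2))⁻¹) ∧
    ((p : ℤ_[p]) ∣ f0 →
      densIn p n
        {v | SepDegP p n (consF0 p n f0 v) ∧ PrimP p n (consF0 p n f0 v) ∧
          EvenRamP p n (consF0 p n f0 v)}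
        {v | SepDegP p n (consF0 p n f0 v) ∧ PrimP p n (consF0 p n f0 v)} =
        ((p : ℝ) ^ (n / 2) + 1)⁻¹) ∧
    (¬ (p : ℤ_[p]) ^ 2 ∣ f0 →
      densIn p n
        {v | SepDegP p n (consF0 p n f0 v) ∧ PrimP p n (consF0 p n f0 v) ∧
          IsMaxOrder ℤ_[p] ℚ_[p] n (consF0 p n f0 v) ∧ EvenRamP p n (consF0 p n f0 v)}
        {v | SepDegP p n (consF0 p n f0 v) ∧ PrimP p n (consF0 p n f0 v) ∧
          IsMaxOrder ℤ_[p] ℚ_[p] n (consF0 p n f0 v)} =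
        ((p : ℝ) ^ (n / 2))⁻¹ * (1 + (p : ℝ)⁻¹)⁻¹) ∧
    ((p : ℤ_[p]) ^ 2 ∣ f0 →
      densIn p n
        {v | SepDegP p n (consF0 p n f0 v) ∧ PrimP p n (consF0 p n f0 v) ∧
          IsMaxOrder ℤ_[p] ℚ_[p] n (consF0 p n f0 v) ∧ EvenRamP p n (consF0 p n f0 v)}
        {v | SepDegP p n (consF0 p n f0 v) ∧ PrimP p n (consF0 p n f0 v) ∧
          IsMaxOrder ℤ_[p] ℚ_[p] n (consF0 p n f0 v)} = 0) := by
  obtain ⟨m, hm⟩ : ∃ m, n = 2 * m := by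
    obtain ⟨m, hm⟩ := heven
    exact ⟨m, by omega⟩
  have hp0 := p_pos (p := p)
  have hp1 := p_gt (p := p)
  have hn0 : 0 < n := by omega
  have hhalf : n / 2 = m := by omega
  have hpm : (0 : ℝ) < (p : ℝ) ^ m := pow_pos hp0 m
  obtain ⟨m', hm'⟩ : ∃ m', m = m' + 1 := ⟨m - 1, by omega⟩
  refine ⟨?_, ?_, ?_, ?_⟩
  · intro hu
    rw [dens_prim n hn0 heven f0 hf0, hhalf, hm, II_even_unit m f0 hu (fun _ => 1),
      II_all_unit (2 * m) f0 hu (fun _ => 1), sum_one, sum_one, two_mul, pow_add]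
    field_simp
  · intro hu
    rw [dens_prim n hn0 heven f0 hf0, hhalf, hm, II_even_zero m f0 hu (fun _ => 1),
      II_all_zero (2 * m) f0 hu (fun _ => 1)]
    simp only [sum_one]
    rw [mul_comm, geom_sum_mul, mul_comm, geom_sum_mul, two_mul, pow_add]
    have h1 : (1 : ℝ) < (p : ℝ) ^ m := one_lt_pow₀ hp1 (by omega)
    have h2 : (p : ℝ) ^ m * (p : ℝ) ^ m - 1 = ((p : ℝ) ^ m - 1) * ((p : ℝ) ^ m + 1) := by ring
    have h3 : (p : ℝ) ^ m - 1 ≠ 0 := by linarith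
    rw [h2, div_mul_cancel_left₀ h3]
  · intro h2
    rw [dens_max n hn0 heven f0 hf0 h2, hhalf, hm]
    by_cases hu : (p : ℤ_[p]) ∣ f0
    · rw [II_even_zero m f0 hu wt, II_all_zero (2 * m) f0 hu wt]
      have e1 := sum_wt_range (k := ZMod p) m'
      have e2 := sum_WW (k := ZMod p) (2 * m')
      unfold WW at e2
      rw [ZMod.card] at e1 e2
      rw [hm', e1, show 2 * (m' + 1) = 2 * m' + 2 by ring, e2]
      have h3 : (p : ℝ) - 1 ≠ 0 := by linarith
      field_simp
      ring
    · rw [II_even_unit m f0 hu wt, II_all_unit (2 * m) f0 hu wt]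
      have e1 := sum_wt_succ (k := ZMod p) m'
      have e2 := WW_add_two (k := ZMod p) (2 * m')
      unfold WW at e2
      rw [ZMod.card] at e1 e2
      rw [hm', e1, show 2 * (m' + 1) = 2 * m' + 2 by ring, e2]
      have h3 : (p : ℝ) - 1 ≠ 0 := by linarith
      have h4 : (p : ℝ) ^ (2 * m' + 2) - (p : ℝ) ^ (2 * m') = (p : ℝ) ^ (2 * m') * (((p : ℝ) - 1) * (p + 1)) := by ring
      have h5 : (p : ℝ) ^ (m' + 1) - (p : ℝ) ^ m' = (p : ℝ) ^ m' * ((p : ℝ) - 1) := by ring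
      rw [h4, h5]
      field_simp
      ring
  · intro h2
    have h0 : haarP p n {v | SepDegP p n (consF0 p n f0 v) ∧ PrimP p n (consF0 p n f0 v) ∧
          IsMaxOrder ℤ_[p] ℚ_[p] n (consF0 p n f0 v) ∧ EvenRamP p n (consF0 p n f0 v)} = 0 := by
      refine measure_mono_null ?_ (null_last (p := p) n hn0 f0)
      rintro v ⟨-, hP, hM, hE⟩
      by_contra hcn
      refine not_isMax_of_sq n (by omega) heven _ hcn ?_ ?_ ((primP_iff n _).mp hP) hE hM
      · rwa [consF0_zero]
      · rwa [consF0_zero]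
    rw [densIn, h0]
    simp

end BHS
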